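/- arXiv:1002.2594 — 10 statements merged into one kernel-verified Lean document; each statement's English description precedes it below -/
import Mathlib

section
/- Let p be a prime, let U be a finite field with p^n elements, and let U' be a field extension of U with [U' : U] = p^i for some i ≥ 0. Let α ∈ U' and set β = Tr_{U'/U}(α). If β ≠ 0, then the subfield F_p(β) of U' generated by β over the prime field F_p is contained in F_p(α), and p^i divides the degree [F_p(α) : F_p(β)]. -/
open IntermediateField

set_option synthInstance.maxHeartbeats 1000000

/-- A sum over `c` full periods of a periodic function is `c` times the sum over one period. -/
theorem Function.Periodic.sum_range_mul {M : Type*} [AddCommMonoid M] {f : ℕ → M} {m : ℕ}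
    (hf : Function.Periodic f m) (c : ℕ) :
    ∑ k ∈ Finset.range (c * m), f k = c • ∑ k ∈ Finset.range m, f k := by
  induction c with
  | zero => simp
  | succ c ih =>
    rw [Nat.succ_mul, Finset.sum_range_add, ih, succ_nsmul]
    congr 1
    refine Finset.sum_congr rfl fun x _ => ?_
    rw [add_comm]
    exact hf.nat_mul c x

/-- If `e * f` divides `n * p ^ i` but not `n * p ^ (i - 1)`, and `e` divides `n`, then `p ^ i`
divides `f`. -/
theorem Nat.Prime.pow_dvd_of_mul_dvd_mul_pow {p n i e f : ℕ} (hp : p.Prime) (hn : n ≠ 0)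
    (he : e ∣ n) (hdvd : e * f ∣ n * p ^ i) (hnot : ∀ j, i = j + 1 → ¬ e * f ∣ n * p ^ j) :
    p ^ i ∣ f := by
  obtain _ | j := i
  · simp
  obtain ⟨c, hc⟩ := hdvd
  have hpc : ¬ p ∣ c := by
    rintro ⟨c', rfl⟩
    refine hnot j rfl ⟨c', Nat.eq_of_mul_eq_mul_right hp.pos ?_⟩
    rw [mul_assoc, ← pow_succ, hc]
    ring
  obtain ⟨k, rfl⟩ := he
  have hfc : k * p ^ (j + 1) = f * c := by
    refine Nat.eq_of_mul_eq_mul_left (Nat.pos_of_ne_zero (left_ne_zero_of_mul hn)) ?_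
    linarith
  exact (((Nat.Prime.coprime_iff_not_dvd hp).2 hpc).pow_left _).dvd_of_dvd_mul_right
    ⟨k, by rw [← hfc, mul_comm]⟩

/-- An element `x` algebraic over `ZMod p` satisfies `x ^ p ^ m = x` whenever its degree
divides `m`. -/
theorem pow_pow_eq_self_of_finrank_adjoin_dvd {p : ℕ} [Fact p.Prime] {L : Type*} [Field L]
    [Algebra (ZMod p) L] {x : L} (hx : IsIntegral (ZMod p) x) {m : ℕ}
    (h : Module.finrank (ZMod p) (ZMod p)⟮x⟯ ∣ m) : x ^ p ^ m = x := by
  have : FiniteDimensional (ZMod p) (ZMod p)⟮x⟯ := adjoin.finiteDimensional hx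
  have : Finite (ZMod p)⟮x⟯ := Module.finite_of_finite (ZMod p)
  have := Fintype.ofFinite (ZMod p)⟮x⟯
  obtain ⟨k, rfl⟩ := h
  have key := FiniteField.pow_card_pow k (AdjoinSimple.gen (ZMod p) x)
  rw [Module.card_eq_pow_finrank (K := ZMod p), ZMod.card, ← pow_mul] at key
  simpa using congrArg (algebraMap (ZMod p)⟮x⟯ L) key

/-- The trace to `U` of an element of `U'` vanishes as soon as the element is fixed by a power
`j` of the Frobenius over `U` such that `[U' : U] = p * j`. -/
theorem FiniteField.algebraMap_trace_eq_zero_of_pow_eq_self (p : ℕ) {U U' : Type*} [Field U]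
    [Field U'] [Algebra U U'] [Finite U'] [CharP U' p] {j : ℕ}
    (hrank : Module.finrank U U' = p * j) {x : U'} (hx : x ^ Nat.card U ^ j = x) :
    algebraMap U U' (Algebra.trace U U' x) = 0 := by
  have hper : Function.Periodic (fun k => x ^ Nat.card U ^ k) j := fun k => by
    simp only [add_comm k, pow_add, pow_mul, hx]
  rw [FiniteField.algebraMap_trace_eq_sum_pow, hrank, hper.sum_range_mul p, nsmul_eq_mul,
    CharP.cast_eq_zero, zero_mul]

/-- Let `p` be a prime, `U` a finite field with `p^n` elements, and `U'` a
field extension of `U` with `[U' : U] = p^i`. Let `α ∈ U'` and `β = Tr_{U'/U}(α)`. If `β ≠ 0`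
then the subfield `F_p(β)` is contained in `F_p(α)` and `p^i` divides `[F_p(α) : F_p(β)]`. -/
theorem pow_dvd_finrank_adjoin_of_trace_ne_zero
    (p n i : ℕ) [Fact p.Prime]
    (U U' : Type*) [Field U] [Field U'] [Algebra U U'] [Fintype U]
    [Algebra (ZMod p) U']
    (hcard : Fintype.card U = p ^ n)
    (hrank : Module.finrank U U' = p ^ i)
    (α β : U') (hβdef : β = algebraMap U U' (Algebra.trace U U' α)) (hβ : β ≠ 0) :
    ∃ h : (ZMod p)⟮β⟯ ≤ (ZMod p)⟮α⟯,
      letI : Algebra ↥((ZMod p)⟮β⟯) ↥((ZMod p)⟮α⟯) :=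
        (IntermediateField.inclusion h).toRingHom.toAlgebra
      p ^ i ∣ Module.finrank ↥((ZMod p)⟮β⟯) ↥((ZMod p)⟮α⟯) := by
  have hp : p.Prime := Fact.out
  have : CharP U' p := charP_of_injective_algebraMap (algebraMap (ZMod p) U').injective p
  have : CharP U p := (algebraMap U U').charP (algebraMap U U').injective p
  let _ : Algebra (ZMod p) U := ZMod.algebra U p
  have : IsScalarTower (ZMod p) U U' := .of_algebraMap_eq' (Subsingleton.elim _ _)
  have : FiniteDimensional U U' := .of_finrank_pos (hrank ▸ pow_pos hp.pos i)
  have : Finite U' := Module.finite_of_finite U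
  have hU : Module.finrank (ZMod p) U = n := by
    rw [Module.card_eq_pow_finrank (K := ZMod p), ZMod.card] at hcard
    exact Nat.pow_right_injective hp.two_le hcard
  have hn : n ≠ 0 := hU ▸ Module.finrank_pos.ne'
  have hβα : β ∈ (ZMod p)⟮α⟯ := by
    rw [hβdef, FiniteField.algebraMap_trace_eq_sum_pow]
    exact sum_mem fun k _ => pow_mem (mem_adjoin_simple_self _ α) _
  have h : (ZMod p)⟮β⟯ ≤ (ZMod p)⟮α⟯ := adjoin_simple_le_iff.2 hβα
  refine ⟨h, ?_⟩
  let _ : Algebra (ZMod p)⟮β⟯ (ZMod p)⟮α⟯ := (IntermediateField.inclusion h).toRingHom.toAlgebra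
  have : IsScalarTower (ZMod p) (ZMod p)⟮β⟯ (ZMod p)⟮α⟯ :=
    .of_algebraMap_eq' (Subsingleton.elim _ _)
  have htower := Module.finrank_mul_finrank (ZMod p) (ZMod p)⟮β⟯ (ZMod p)⟮α⟯
  have hβn : Module.finrank (ZMod p) (ZMod p)⟮β⟯ ∣ n := by
    rw [adjoin.finrank (.of_finite _ β), hβdef,
      minpoly.algebraMap_eq (algebraMap U U').injective, ← hU]
    exact minpoly.degree_dvd (.of_finite _ _)
  refine hp.pow_dvd_of_mul_dvd_mul_pow hn hβn ?_ ?_ <;> rw [htower]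
  · rw [← hU, ← hrank, Module.finrank_mul_finrank]
    exact ⟨_, (Module.finrank_mul_finrank (ZMod p) (ZMod p)⟮α⟯ U').symm⟩
  · rintro j rfl hdvd
    refine hβ (hβdef.trans
      (FiniteField.algebraMap_trace_eq_zero_of_pow_eq_self p (hrank.trans (pow_succ' p j)) ?_))
    rw [Nat.card_eq_fintype_card, hcard, ← pow_mul]
    exact pow_pow_eq_self_of_finrank_adjoin_dvd (.of_finite _ α) hdvd
end

section
/- Let p be an odd prime, let U ⊆ U' be finite fields of characteristic p with [U' : U] = p, and let x ∈ U' with x ∉ U be such that x^p − x = γ for some γ ∈ U. Then Tr_{U'/U}(x^{2p−1}) = −γ. -/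
open Finset in
/-- For a prime `p`, the sum of `a ^ (p - 1)` over `a : ZMod p` is `-1`. -/
theorem ZMod.sum_pow_sub_one (p : ℕ) [Fact p.Prime] : ∑ a : ZMod p, a ^ (p - 1) = -1 := by
  have hp : p.Prime := Fact.out
  have h : ∀ a : ZMod p, a ^ (p - 1) = 1 - if a = 0 then 1 else 0 := by
    intro a
    split_ifs with ha
    · simp [ha, zero_pow (Nat.sub_ne_zero_of_lt hp.one_lt)]
    · simp [ZMod.pow_card_sub_one_eq_one ha]
  simp [h]

open Finset in
/-- In an algebra over `ZMod p`, the sum of `(y + a) ^ (p - 1)` over `a : ZMod p` is `-1`. -/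
theorem ZMod.sum_add_algebraMap_pow_sub_one (p : ℕ) [Fact p.Prime] {R : Type*} [CommRing R]
    [Algebra (ZMod p) R] (y : R) :
    ∑ a : ZMod p, (y + algebraMap (ZMod p) R a) ^ (p - 1) = -1 := by
  simp_rw [add_pow]
  rw [sum_comm, sum_range_succ', sum_eq_zero, zero_add]
  · simpa using congrArg (algebraMap (ZMod p) R) (ZMod.sum_pow_sub_one p)
  · intro k hk
    rw [mem_range] at hk
    rw [← sum_mul, ← mul_sum]
    simp_rw [← map_pow]
    rw [← map_sum, FiniteField.sum_pow_lt_card_sub_one _ _ (by rw [ZMod.card]; omega)]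
    simp

open Finset in
/-- For an odd prime `p`, in an algebra over `ZMod p`, the sum of `y + a` over `a : ZMod p`
vanishes. -/
theorem ZMod.sum_add_algebraMap (p : ℕ) [Fact p.Prime] (hodd : p ≠ 2) {R : Type*} [CommRing R]
    [Algebra (ZMod p) R] (y : R) :
    ∑ a : ZMod p, (y + algebraMap (ZMod p) R a) = 0 := by
  have hp : p.Prime := Fact.out
  have h0 : (p : R) = 0 := by
    rw [← map_natCast (algebraMap (ZMod p) R), CharP.cast_eq_zero, map_zero]
  have h1 := FiniteField.sum_pow_lt_card_sub_one (ZMod p) 1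
    (by rw [ZMod.card]; have := hp.two_le; omega)
  simp only [pow_one] at h1
  rw [sum_add_distrib, ← map_sum, h1]
  simp [h0]

/-- In a field extension of prime degree `p` in characteristic `p`, the conjugates of an
Artin-Schreier generator `x` are the elements `x + a` with `a : ZMod p`. -/
theorem exists_gal_equiv_zmod_of_artinSchreier (p : ℕ) [Fact p.Prime]
    {K L : Type*} [Field K] [Field L] [Algebra K L] [Algebra (ZMod p) L] [FiniteDimensional K L]
    [IsGalois K L] (hrank : Module.finrank K L = p)
    {x : L} (hx : x ∉ Set.range (algebraMap K L))
    {γ : K} (hγ : x ^ p - x = algebraMap K L γ) :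
    ∃ e : Gal(L/K) ≃ ZMod p, ∀ σ : Gal(L/K), σ x = x + algebraMap (ZMod p) L (e σ) := by
  have hp : p.Prime := Fact.out
  have : CharP L p := charP_of_injective_algebraMap' (ZMod p) p
  have hex : ∀ σ : Gal(L/K), ∃ a : ZMod p, σ x = x + algebraMap (ZMod p) L a := by
    intro σ
    have hσ : σ x ^ p - σ x = algebraMap K L γ := by
      rw [← map_pow, ← map_sub, hγ, AlgEquiv.commutes]
    have hmem : σ x - x ∈ (⊥ : Subfield L) := by
      rw [Subfield.mem_bot_iff_pow_eq_self L p, sub_pow_char]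
      linear_combination hσ - hγ
    rw [Subfield.bot_eq_of_zMod_algebra p] at hmem
    obtain ⟨a, ha⟩ := hmem
    exact ⟨a, by rw [ha]; ring⟩
  choose c hc using hex
  have hinj : Function.Injective c := by
    intro σ τ h
    have hmem : x ∈ AlgHom.equalizer (σ : L →ₐ[K] L) (τ : L →ₐ[K] L) := by
      simp [AlgHom.mem_equalizer, hc, h]
    have := Subalgebra.isSimpleOrder_of_finrank_prime K L (hrank.symm ▸ hp)
    rcases eq_bot_or_eq_top (AlgHom.equalizer (σ : L →ₐ[K] L) (τ : L →ₐ[K] L)) with hb | ht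
    · rw [hb] at hmem
      exact absurd (Algebra.mem_bot.mp hmem) hx
    · ext y
      have hy : y ∈ AlgHom.equalizer (σ : L →ₐ[K] L) (τ : L →ₐ[K] L) := ht ▸ Algebra.mem_top
      exact hy
  have hcard : Nat.card Gal(L/K) = Nat.card (ZMod p) := by
    rw [IsGalois.card_aut_eq_finrank, hrank, Nat.card_zmod]
  exact ⟨Equiv.ofBijective c ((Nat.bijective_iff_injective_and_card c).mpr ⟨hinj, hcard⟩), hc⟩

/-- Let `p` be an odd prime, let `U ⊆ U'` be finite fields of characteristic
`p` with `[U' : U] = p`, and let `x ∈ U'` with `x ∉ U` be such that `x^p − x = γ` for some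
`γ ∈ U`. Then `Tr_{U'/U}(x^(2p−1)) = −γ`. -/
theorem trace_artinSchreier_gen_pow_two_p_sub_one
    (p : ℕ) (hp : p.Prime) (hodd : p ≠ 2)
    (U U' : Type*) [Field U] [Field U'] [Algebra U U'] [Finite U'] [CharP U' p]
    (hrank : Module.finrank U U' = p)
    (x : U') (hx : x ∉ Set.range (algebraMap U U'))
    (γ : U) (hγ : x ^ p - x = algebraMap U U' γ) :
    Algebra.trace U U' (x ^ (2 * p - 1)) = -γ := by
  have : Fact p.Prime := ⟨hp⟩
  have : Finite U := Finite.of_injective _ (algebraMap U U').injective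
  let _ : Algebra (ZMod p) U' := ZMod.algebra U' p
  obtain ⟨e, he⟩ := exists_gal_equiv_zmod_of_artinSchreier p hrank hx hγ
  have hsum : ∀ n : ℕ, algebraMap U U' (Algebra.trace U U' (x ^ n)) =
      ∑ a : ZMod p, (x + algebraMap (ZMod p) U' a) ^ n := by
    intro n
    rw [trace_eq_sum_automorphisms, ← e.sum_comp]
    simp [he]
  have htr : Algebra.trace U U' x = 0 := by
    apply (algebraMap U U').injective
    simpa [ZMod.sum_add_algebraMap p hodd x] using hsum 1
  have htr' : Algebra.trace U U' (x ^ (p - 1)) = -1 := by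
    apply (algebraMap U U').injective
    simpa [ZMod.sum_add_algebraMap_pow_sub_one p x] using hsum (p - 1)
  have hone : Algebra.trace U U' (algebraMap U U' γ) = 0 := by
    have : CharP U p := (algebraMap U U').charP (algebraMap U U').injective p
    rw [Algebra.trace_algebraMap, hrank, nsmul_eq_mul, CharP.cast_eq_zero, zero_mul]
  have hpow : x ^ (2 * p - 1) = x + algebraMap U U' γ + γ • x ^ (p - 1) := by
    obtain ⟨m, rfl⟩ := Nat.exists_eq_add_of_lt hp.pos
    rw [show 2 * (0 + m + 1) - 1 = (0 + m + 1) + m by omega,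
      show 0 + m + 1 - 1 = m by omega, Algebra.smul_def, ← hγ]
    ring
  rw [hpow, map_add, map_add, map_smul, htr, hone, htr']
  simp
end

section
/- In the Cantor tower over F_p with p odd, for every i ≥ 0 the field U_i has degree [U_i : F_p] = p^i · d over F_p, and for every i ≥ 1 one has Tr_{U_i/U_{i−1}}(γ_i) = −γ_{i−1}. -/
open IntermediateField

set_option synthInstance.maxHeartbeats 1000000

theorem pow_prime_pow_eq_add_sum {R : Type*} [CommRing R] (p : ℕ) [Fact p.Prime] [CharP R p]
    {x c : R} (h : x ^ p - x = c) (n : ℕ) :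
    x ^ p ^ n = x + ∑ j ∈ Finset.range n, c ^ p ^ j := by
  induction n with
  | zero => simp
  | succ n ih =>
    have hx : x ^ p = x + c := by rw [← h]; ring
    rw [pow_succ', pow_mul, hx, add_pow_char_pow, ih, Finset.sum_range_succ]
    ring

theorem finrank_eq_of_artinSchreier (p : ℕ) [Fact p.Prime] {K L : Type*} [Field K] [Field L]
    [Finite L] [Algebra (ZMod p) K] [Algebra K L] {x : L} {c : K}
    (hx : x ^ p - x = algebraMap K L c) (hc : Algebra.trace (ZMod p) K c ≠ 0)
    (htop : K⟮x⟯ = ⊤) : Module.finrank K L = p := by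
  have : Finite K := Finite.of_injective _ (algebraMap K L).injective
  have := Fintype.ofFinite K
  have : CharP K p := charP_of_injective_algebraMap (algebraMap (ZMod p) K).injective p
  have : CharP L p := charP_of_injective_algebraMap (algebraMap K L).injective p
  set σ := FiniteField.frobeniusAlgEquivOfAlgebraic K L
  set t : L := algebraMap K L (algebraMap (ZMod p) K (Algebra.trace (ZMod p) K c)) with ht
  have ht0 : t ≠ 0 := by simpa [ht] using hc
  have hσ : σ x = x + t := by
    change x ^ Fintype.card K = x + t
    rw [Module.card_eq_pow_finrank (K := ZMod p),
      ZMod.card, pow_prime_pow_eq_add_sum p hx, ht, FiniteField.algebraMap_trace_eq_sum_pow]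
    simp
  have hσn (n : ℕ) : (σ ^ n) x = x + n * t := by
    induction n with
    | zero => simp
    | succ n ih =>
      rw [pow_succ, AlgEquiv.mul_apply, hσ, map_add, ih, AlgEquiv.commutes]
      push_cast
      ring
  have hone (n : ℕ) : σ ^ n = 1 ↔ p ∣ n := by
    rw [← CharP.cast_eq_zero_iff L p]
    constructor
    · intro h
      have := hσn n
      simpa [h, ht0] using this
    · intro h
      have h2 := hσn n
      rw [h, zero_mul, add_zero] at h2
      apply AlgEquiv.coe_toAlgHom_injective
      refine AlgHom.ext_of_adjoin_eq_top (s := {x}) ?_ ?_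
      · rw [← IntermediateField.adjoin_simple_toSubalgebra_of_isAlgebraic
          (Algebra.IsAlgebraic.isAlgebraic x), htop, IntermediateField.top_toSubalgebra]
      · rintro _ rfl
        exact h2
  rw [← FiniteField.orderOf_frobeniusAlgEquivOfAlgebraic K L]
  exact Nat.dvd_antisymm (orderOf_dvd_iff_pow_eq_one.2 ((hone p).2 dvd_rfl))
    ((hone _).1 (pow_orderOf_eq_one σ))

theorem trace_pow_of_artinSchreier (p : ℕ) [Fact p.Prime] (hp : p ≠ 2) {K L : Type*} [Field K]
    [Field L] [Algebra K L] [CharP K p] {x : L} {c : K} (hx : x ^ p - x = algebraMap K L c)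
    (hrank : Module.finrank K L = p) (htop : K⟮x⟯ = ⊤) :
    Algebra.trace K L (x ^ (2 * p - 1)) = -c := by
  have hp3 : 2 < p := lt_of_le_of_ne (Fact.out : p.Prime).two_le hp.symm
  have : FiniteDimensional K L := Module.finite_of_finrank_pos (by omega)
  have hxp : x ^ p = x + algebraMap K L c := by rw [← hx]; ring
  have hdeg : (minpoly K x).natDegree = p := by
    rw [← hrank, ← Field.primitive_element_iff_minpoly_natDegree_eq]
    exact htop
  have hli : LinearIndependent K fun i : Fin p ↦ x ^ (i : ℕ) := by
    have h := linearIndependent_pow (K := K) x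
    rw [hdeg] at h
    exact h
  let b := basisOfLinearIndependentOfCardEqFinrank hli (by simp [hrank])
  have hb (i : ℕ) (hi : i < p) : x ^ i = b ⟨i, hi⟩ := by simp [b]
  have hb' (i : Fin p) : b i = x ^ (i : ℕ) := by simp [b]
  have htr1 : Algebra.trace K L x = 0 := by
    rw [Algebra.trace_eq_matrix_trace b, Matrix.trace]
    refine Finset.sum_eq_zero fun i _ ↦ ?_
    rw [Matrix.diag_apply, Algebra.leftMulMatrix_eq_repr_mul, hb', ← pow_succ']
    by_cases hi : (i : ℕ) + 1 < p
    · rw [hb _ hi, b.repr_self, Finsupp.single_apply, if_neg]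
      simp [Fin.ext_iff]
    · have hi' : (i : ℕ) + 1 = p := by omega
      rw [hi', hxp, Algebra.algebraMap_eq_smul_one, ← pow_one x, ← pow_zero x, hb 1 (by omega),
        hb 0 (by omega), map_add, map_smul, b.repr_self, b.repr_self]
      have h1 : (⟨1, by omega⟩ : Fin p) ≠ i := by simp [Fin.ext_iff]; omega
      have h0 : (⟨0, by omega⟩ : Fin p) ≠ i := by simp [Fin.ext_iff]; omega
      rw [Finsupp.add_apply, Finsupp.smul_apply, Finsupp.single_eq_of_ne' h1,
        Finsupp.single_eq_of_ne' h0, smul_zero, add_zero]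
  have htr2 : Algebra.trace K L (x ^ (p - 1)) = -1 := by
    rw [Algebra.trace_eq_matrix_trace b, Matrix.trace]
    have hdiag (i : Fin p) : (Algebra.leftMulMatrix b (x ^ (p - 1))).diag i =
        1 - if i = ⟨0, by omega⟩ then 1 else 0 := by
      rw [Matrix.diag_apply, Algebra.leftMulMatrix_eq_repr_mul, hb', ← pow_add]
      obtain ⟨_ | i, hi⟩ := i
      · rw [add_zero, hb _ (by omega), b.repr_self, Finsupp.single_apply, if_neg]
        · simp
        · simp [Fin.ext_iff]; omega
      · have : p - 1 + (i + 1) = p + i := by omega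
        rw [this, pow_add, hxp, add_mul, ← pow_succ', ← Algebra.smul_def, hb _ hi,
          hb i (by omega), map_add, map_smul, b.repr_self, b.repr_self]
        simp [Fin.ext_iff]
    simp_rw [hdiag, Finset.sum_sub_distrib, Finset.sum_ite_eq']
    simp
  have hpow : x ^ (2 * p - 1) = x + algebraMap K L c + c • x ^ (p - 1) := by
    have h1 : 2 * p - 1 = p + (p - 1) := by omega
    have h2 : x * x ^ (p - 1) = x ^ p := by rw [← pow_succ']; congr 1; omega
    rw [h1, pow_add, hxp, add_mul, h2, hxp, Algebra.smul_def]
  rw [hpow, map_add, map_add, map_smul, htr1, htr2, Algebra.trace_algebraMap, hrank]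
  simp

theorem IntermediateField.adjoin_simple_eq_top_of_le_adjoin {F E : Type*} [Field F] [Field E]
    [Algebra F E] {A B : IntermediateField F E} [Algebra A B] [IsScalarTower F A B]
    (hAB : ∀ a : A, (algebraMap A B a : E) = a) (x : B)
    (hB : B ≤ adjoin F (insert (x : E) (A : Set E))) : A⟮x⟯ = ⊤ := by
  rw [eq_top_iff]
  intro y _
  have hle : adjoin F (insert (x : E) (A : Set E)) ≤ lift (A⟮x⟯.restrictScalars F) := by
    rw [adjoin_le_iff, Set.insert_subset_iff]
    refine ⟨(mem_lift x).2 (mem_adjoin_simple_self A x), fun a ha ↦ ?_⟩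
    have h := (mem_lift (algebraMap A B ⟨a, ha⟩)).2
      (show _ ∈ A⟮x⟯.restrictScalars F from A⟮x⟯.algebraMap_mem ⟨a, ha⟩)
    rwa [hAB] at h
  exact (mem_lift y).1 (hle (hB y.2))

theorem finrank_and_trace_of_artinSchreier_step (p : ℕ) [Fact p.Prime] (hp : p ≠ 2) {E : Type*}
    [Field E] [Algebra (ZMod p) E] {A B : IntermediateField (ZMod p) E}
    [FiniteDimensional (ZMod p) B] (hle : A ≤ B) (x : B) (c : A)
    (hB : B ≤ adjoin (ZMod p) (insert (x : E) (A : Set E)))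
    (hx : (x : E) ^ p - x = c) (hc : Algebra.trace (ZMod p) A c ≠ 0) :
    letI : Algebra A B := (inclusion hle).toRingHom.toAlgebra
    Module.finrank (ZMod p) B = p * Module.finrank (ZMod p) A ∧
      Algebra.trace A B (x ^ (2 * p - 1)) = -c ∧
      Algebra.trace (ZMod p) B (x ^ (2 * p - 1)) ≠ 0 := by
  let : Algebra A B := (inclusion hle).toRingHom.toAlgebra
  have : IsScalarTower (ZMod p) A B := .of_algebraMap_eq fun _ ↦ rfl
  have : Finite B := Module.finite_of_finite (ZMod p)
  have : CharP A p := charP_of_injective_algebraMap (algebraMap (ZMod p) A).injective p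
  have hx' : x ^ p - x = algebraMap A B c := Subtype.ext hx
  have htop : A⟮x⟯ = ⊤ := adjoin_simple_eq_top_of_le_adjoin (fun _ ↦ rfl) x hB
  have hrank := finrank_eq_of_artinSchreier p hx' hc htop
  have htr := trace_pow_of_artinSchreier p hp hx' hrank htop
  have : FiniteDimensional A B := .right (ZMod p) A B
  have : FiniteDimensional (ZMod p) A := .left (ZMod p) A B
  refine ⟨?_, htr, ?_⟩
  · rw [← Module.finrank_mul_finrank (ZMod p) A B, hrank, mul_comm]
  · rw [← Algebra.trace_trace (S := A), htr, map_neg]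
    exact neg_ne_zero.2 hc

/-- In the Cantor tower over `F_p` with `p` odd, for every `i ≥ 0` the field
`U_i` has degree `p^i · d` over `F_p`, and for every `i ≥ 1` one has
`Tr_{U_i/U_{i−1}}(γ_i) = −γ_{i−1}`. -/
theorem cantor_tower_finrank_and_trace
    (p d : ℕ) [Fact p.Prime] (hodd : p ≠ 2) (hd : 1 ≤ d)
    (Ω : Type*) [Field Ω] [Algebra (ZMod p) Ω] [IsAlgClosure (ZMod p) Ω]
    (x : ℕ → Ω)
    (U : ℕ → IntermediateField (ZMod p) Ω)
    (hU : ∀ i, U i = IntermediateField.adjoin (ZMod p) (x '' Set.Iic i))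
    (hdeg : Module.finrank (ZMod p) ↥(U 0) = d)
    (hx0 : x 0 ∈ U 0)
    (htr0 : Algebra.trace (ZMod p) ↥(U 0) ⟨x 0, hx0⟩ ≠ 0)
    (hx1 : x 1 ^ p - x 1 = x 0)
    (hxi : ∀ i, 1 ≤ i → x (i + 1) ^ p - x (i + 1) = x i ^ (2 * p - 1))
    (γ : ℕ → Ω) (hγ0 : γ 0 = x 0) (hγ : ∀ i, 1 ≤ i → γ i = x i ^ (2 * p - 1)) :
    (∀ i, Module.finrank (ZMod p) ↥(U i) = p ^ i * d) ∧
      ∀ i, 1 ≤ i → ∃ (hle : U (i - 1) ≤ U i) (hγi : γ i ∈ U i) (hγi' : γ (i - 1) ∈ U (i - 1)),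
        letI : Algebra ↥(U (i - 1)) ↥(U i) :=
          (IntermediateField.inclusion hle).toRingHom.toAlgebra
        Algebra.trace ↥(U (i - 1)) ↥(U i) ⟨γ i, hγi⟩ = -(⟨γ (i - 1), hγi'⟩ : ↥(U (i - 1))) := by
  have hxU (i : ℕ) : x i ∈ U i := by
    rw [hU]
    exact subset_adjoin _ _ ⟨i, Set.self_mem_Iic, rfl⟩
  have hγU (i : ℕ) : γ i ∈ U i := by
    rcases i with _ | i
    · rwa [hγ0]
    · rw [hγ _ (by omega)]
      exact pow_mem (hxU _) _
  have hle (i : ℕ) : U i ≤ U (i + 1) := by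
    rw [hU, hU]
    exact adjoin.mono _ _ _ (Set.image_mono (Set.Iic_subset_Iic.2 i.le_succ))
  have hgen (i : ℕ) : U (i + 1) ≤ adjoin (ZMod p) (insert (x (i + 1)) (U i : Set Ω)) := by
    rw [hU (i + 1), adjoin_le_iff]
    rintro _ ⟨j, hj, rfl⟩
    rcases Nat.le_succ_iff.1 hj with hj | rfl
    · refine subset_adjoin _ _ (Or.inr ?_)
      rw [hU i]
      exact subset_adjoin _ _ ⟨j, hj, rfl⟩
    · exact subset_adjoin _ _ (Or.inl rfl)
  have hrec (i : ℕ) : x (i + 1) ^ p - x (i + 1) = γ i := by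
    rcases i with _ | i
    · rw [hγ0, hx1]
    · rw [hxi _ (by omega), hγ _ (by omega)]
  have : Algebra.IsAlgebraic (ZMod p) Ω := IsAlgClosure.isAlgebraic
  have hfin (i : ℕ) : FiniteDimensional (ZMod p) (U i) := by
    rw [hU]
    have : Finite (x '' Set.Iic i) := (Set.finite_Iic i).image x
    exact finiteDimensional_adjoin fun y _ ↦ Algebra.IsIntegral.isIntegral y
  have hpow (i : ℕ) : (⟨x (i + 1), hxU _⟩ : U (i + 1)) ^ (2 * p - 1) = ⟨γ (i + 1), hγU _⟩ :=
    Subtype.ext (hγ _ (by omega)).symm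
  have hstep (i : ℕ) (h : Algebra.trace (ZMod p) (U i) ⟨γ i, hγU i⟩ ≠ 0) :=
    finrank_and_trace_of_artinSchreier_step p hodd (hle i) ⟨x (i + 1), hxU _⟩ ⟨γ i, hγU i⟩
      (hgen i) (hrec i) h
  simp_rw [hpow] at hstep
  have htr (i : ℕ) : Algebra.trace (ZMod p) (U i) ⟨γ i, hγU i⟩ ≠ 0 := by
    induction i with
    | zero => simpa only [hγ0] using htr0
    | succ i ih => exact (hstep i ih).2.2
  refine ⟨fun i ↦ ?_, fun i hi ↦ ?_⟩
  · induction i with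
    | zero => rw [hdeg, pow_zero, one_mul]
    | succ i ih => rw [(hstep i (htr i)).1, ih, pow_succ', mul_assoc]
  · obtain ⟨i, rfl⟩ := Nat.exists_eq_add_of_le' hi
    exact ⟨hle i, hγU _, hγU i, (hstep i (htr i)).2.1⟩
end

section
/- In the Cantor tower over F_p with p odd, for every i ≥ 0 the element x_i generates U_i over F_p; that is, F_p(x_i) = U_i = F_p(x_0, …, x_i), and in particular [F_p(x_i) : F_p] = p^i · d. -/
open IntermediateField

/-- Elements of a finite set fixed by the `m`-th power of Frobenius generate a field of degree
dividing `m`. -/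
theorem finrank_adjoin_dvd_of_pow_eq_self {p : ℕ} [Fact p.Prime] {Ω : Type*} [Field Ω]
    [Algebra (ZMod p) Ω] [Algebra.IsAlgebraic (ZMod p) Ω] {S : Set Ω} (hS : S.Finite) {m : ℕ}
    (h : ∀ s ∈ S, s ^ p ^ m = s) :
    Module.finrank (ZMod p) ↥(adjoin (ZMod p) S) ∣ m := by
  have : Finite S := hS
  have : FiniteDimensional (ZMod p) ↥(adjoin (ZMod p) S) :=
    finiteDimensional_adjoin fun x _ => Algebra.IsIntegral.isIntegral x
  have : Finite ↥(adjoin (ZMod p) S) := Module.finite_of_finite (ZMod p)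
  rw [← FiniteField.orderOf_frobeniusAlgHom (ZMod p) ↥(adjoin (ZMod p) S),
    orderOf_dvd_iff_pow_eq_one]
  refine algHom_ext_of_eq_adjoin (ZMod p) rfl fun s hs => ?_
  apply Subtype.ext
  simp [AlgHom.coe_pow, FiniteField.coe_frobeniusAlgHom, pow_iterate, h s hs]

/-- An element of an algebraic extension of `ZMod p` is fixed by the power of Frobenius given by
its degree. -/
theorem pow_pow_finrank_adjoin_eq_self {p : ℕ} [Fact p.Prime] {Ω : Type*} [Field Ω]
    [Algebra (ZMod p) Ω] [Algebra.IsAlgebraic (ZMod p) Ω] (x : Ω) :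
    x ^ p ^ Module.finrank (ZMod p) ↥(ZMod p)⟮x⟯ = x := by
  have : FiniteDimensional (ZMod p) ↥(ZMod p)⟮x⟯ :=
    adjoin.finiteDimensional (Algebra.IsIntegral.isIntegral x)
  have : Finite ↥(ZMod p)⟮x⟯ := Module.finite_of_finite (ZMod p)
  have := Fintype.ofFinite ↥(ZMod p)⟮x⟯
  have h := FiniteField.pow_card (AdjoinSimple.gen (ZMod p) x)
  rw [Module.card_eq_pow_finrank (K := ZMod p), ZMod.card] at h
  simpa using congrArg Subtype.val h

theorem sum_range_natCast_zmod {p : ℕ} [NeZero p] {M : Type*} [AddCommMonoid M]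
    (f : ZMod p → M) : ∑ j ∈ Finset.range p, f j = ∑ a, f a :=
  Finset.sum_bij' (fun j _ => (j : ZMod p)) (fun a _ => a.val) (by simp)
    (fun a _ => by simpa using a.val_lt) (fun j hj => ZMod.val_cast_of_lt (by simpa using hj))
    (by simp) (by simp)

/-- Translates of `y` by the prime field: the sum of their `(p - 1)`-st powers is `-1`. -/
theorem sum_add_algebraMap_pow_pred {p : ℕ} [Fact p.Prime] {Ω : Type*} [Field Ω]
    [Algebra (ZMod p) Ω] (y : Ω) :
    ∑ a : ZMod p, (y + algebraMap (ZMod p) Ω a) ^ (p - 1) = -1 := by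
  have hp := (Fact.out : p.Prime).two_le
  simp_rw [add_pow, ← map_pow]
  rw [Finset.sum_comm]
  simp_rw [mul_right_comm _ (algebraMap (ZMod p) Ω _), ← Finset.mul_sum, ← map_sum]
  rw [Finset.sum_eq_single 0]
  · have h : ∑ a : ZMod p, a ^ (p - 1) = -1 := by
      have h1 : ∀ a : ZMod p, a ^ (p - 1) = 1 - if a = 0 then 1 else 0 := by
        intro a
        split_ifs with ha
        · simp [ha, show p - 1 ≠ 0 by lia]
        · simp [ZMod.pow_card_sub_one_eq_one ha]
      simp [h1]
    simp [h]
  · intro k hk hk0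
    rw [FiniteField.sum_pow_lt_card_sub_one]
    · simp
    · rw [ZMod.card]
      have := Finset.mem_range.1 hk
      lia
  · simp

/-- The relative trace of `y ^ (2p - 1)` for a root `y` of an Artin-Schreier polynomial. -/
theorem sum_add_algebraMap_pow_two_mul_sub_one {p : ℕ} [Fact p.Prime] (hodd : p ≠ 2)
    {Ω : Type*} [Field Ω] [Algebra (ZMod p) Ω] (y : Ω) :
    ∑ a : ZMod p, (y + algebraMap (ZMod p) Ω a) ^ (2 * p - 1) = -(y ^ p - y) := by
  have : CharP Ω p := charP_of_injective_algebraMap (algebraMap (ZMod p) Ω).injective p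
  have hp := (Fact.out : p.Prime).two_le
  have key : ∀ a : ZMod p, (y + algebraMap (ZMod p) Ω a) ^ (2 * p - 1) =
      y ^ p + algebraMap (ZMod p) Ω a +
        (y ^ p - y) * (y + algebraMap (ZMod p) Ω a) ^ (p - 1) := by
    intro a
    have h1 : (y + algebraMap (ZMod p) Ω a) ^ p = y ^ p + algebraMap (ZMod p) Ω a := by
      rw [add_pow_char, ← map_pow, ZMod.pow_card]
    have h2 : (y + algebraMap (ZMod p) Ω a) ^ p =
        (y + algebraMap (ZMod p) Ω a) ^ (p - 1) * (y + algebraMap (ZMod p) Ω a) := by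
      rw [← pow_succ, Nat.sub_add_cancel (by lia)]
    rw [show 2 * p - 1 = (p - 1) + p by lia, pow_add]
    linear_combination ((y + algebraMap (ZMod p) Ω a) ^ (p - 1) + 1) * h1 - h2
  have hsum : ∑ a : ZMod p, a = 0 := by
    simpa using FiniteField.sum_pow_lt_card_sub_one (ZMod p) 1 (by rw [ZMod.card]; lia)
  rw [Finset.sum_congr rfl fun a _ => key a, Finset.sum_add_distrib, Finset.sum_add_distrib,
    ← Finset.mul_sum, sum_add_algebraMap_pow_pred, ← map_sum, hsum]
  simp

/-- `g` is fixed by the `n`-th power of Frobenius, and its absolute trace computed in the field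
with `p ^ n` elements is `c`. -/
structure HasFrobeniusTrace (p : ℕ) {Ω : Type*} [Field Ω] [Algebra (ZMod p) Ω]
    (n : ℕ) (c : ZMod p) (g : Ω) : Prop where
  pow_eq_self : g ^ p ^ n = g
  sum_pow : ∑ k ∈ Finset.range n, g ^ p ^ k = algebraMap (ZMod p) Ω c

namespace HasFrobeniusTrace

variable {p : ℕ} [Fact p.Prime] {Ω : Type*} [Field Ω] [Algebra (ZMod p) Ω] {n : ℕ} {c : ZMod p}
  {g y : Ω}

theorem root_pow (hg : HasFrobeniusTrace p n c g) (hy : y ^ p - y = g) :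
    y ^ p ^ n = y + algebraMap (ZMod p) Ω c := by
  have : CharP Ω p := charP_of_injective_algebraMap (algebraMap (ZMod p) Ω).injective p
  have h := Finset.sum_range_sub (fun k => y ^ p ^ k) n
  have h' : ∀ k, y ^ p ^ (k + 1) - y ^ p ^ k = g ^ p ^ k := by
    intro k
    rw [← hy, sub_pow_char_pow, ← pow_mul, pow_succ']
  simp_rw [h', hg.sum_pow] at h
  rw [h]
  simp

theorem root_pow_mul (hg : HasFrobeniusTrace p n c g) (hy : y ^ p - y = g) (j : ℕ) :
    y ^ p ^ (n * j) = y + algebraMap (ZMod p) Ω (j * c) := by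
  have : CharP Ω p := charP_of_injective_algebraMap (algebraMap (ZMod p) Ω).injective p
  induction j with
  | zero => simp
  | succ j ih =>
    rw [Nat.mul_succ, pow_add, pow_mul, ih, add_pow_char_pow, hg.root_pow hy, ← map_pow,
      ZMod.pow_card_pow]
    rw [Nat.cast_succ, add_one_mul, map_add]
    ring

theorem sum_root_pow (hg : HasFrobeniusTrace p n c g) (hodd : p ≠ 2) (hc : c ≠ 0)
    (hy : y ^ p - y = g) :
    ∑ j ∈ Finset.range p, (y ^ (2 * p - 1)) ^ p ^ (n * j) = -g := by
  simp_rw [pow_right_comm y, hg.root_pow_mul hy]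
  rw [sum_range_natCast_zmod
    (fun a : ZMod p => (y + algebraMap (ZMod p) Ω (a * c)) ^ (2 * p - 1)), ← hy,
    ← sum_add_algebraMap_pow_two_mul_sub_one hodd y]
  exact Equiv.sum_comp (Equiv.mulRight₀ c hc)
    (fun a => (y + algebraMap (ZMod p) Ω a) ^ (2 * p - 1))

theorem root_pow_mul_self (hg : HasFrobeniusTrace p n c g) (hy : y ^ p - y = g) :
    y ^ p ^ (n * p) = y := by
  simp [hg.root_pow_mul hy]

theorem succ (hg : HasFrobeniusTrace p n c g) (hodd : p ≠ 2) (hc : c ≠ 0)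
    (hy : y ^ p - y = g) : HasFrobeniusTrace p (n * p) (-c) (y ^ (2 * p - 1)) where
  pow_eq_self := by rw [pow_right_comm, hg.root_pow_mul_self hy]
  sum_pow := by
    have : CharP Ω p := charP_of_injective_algebraMap (algebraMap (ZMod p) Ω).injective p
    have split : ∀ m, ∑ k ∈ Finset.range (n * m), (y ^ (2 * p - 1)) ^ p ^ k =
        ∑ j ∈ Finset.range m, ∑ k ∈ Finset.range n, (y ^ (2 * p - 1)) ^ p ^ (n * j + k) := by
      intro m
      induction m with
      | zero => simp
      | succ m ih => rw [Nat.mul_succ, Finset.sum_range_add, ih, Finset.sum_range_succ]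
    rw [split, Finset.sum_comm, map_neg, ← hg.sum_pow, ← Finset.sum_neg_distrib]
    refine Finset.sum_congr rfl fun k _ => ?_
    simp_rw [pow_add p, pow_mul _ (p ^ (n * _)) (p ^ k)]
    rw [← sum_pow_char_pow, hg.sum_root_pow hodd hc hy, ← iterateFrobenius_def, map_neg,
      iterateFrobenius_def]

/-- A power of Frobenius fixing `y ^ (2p - 1)` fixes its relative trace. -/
theorem pow_eq_self_of_root (hg : HasFrobeniusTrace p n c g) (hodd : p ≠ 2) (hc : c ≠ 0)
    (hy : y ^ p - y = g) {m : ℕ} (hm : (y ^ (2 * p - 1)) ^ p ^ m = y ^ (2 * p - 1)) :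
    g ^ p ^ m = g := by
  have : CharP Ω p := charP_of_injective_algebraMap (algebraMap (ZMod p) Ω).injective p
  have h := congrArg (iterateFrobenius Ω p m) (hg.sum_root_pow hodd hc hy)
  simp_rw [map_sum, map_neg, map_pow, ← map_pow (iterateFrobenius Ω p m) y, iterateFrobenius_def,
    hm, hg.sum_root_pow hodd hc hy] at h
  exact (neg_injective h).symm

end HasFrobeniusTrace

/-- In the Cantor tower over `F_p` with `p` odd, for every `i ≥ 0` the
element `x_i` generates `U_i` over `F_p`: `F_p(x_i) = U_i = F_p(x_0, …, x_i)`, and in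
particular `[F_p(x_i) : F_p] = p^i · d`. -/
theorem cantor_tower_is_primitive
    (p d : ℕ) [Fact p.Prime] (hodd : p ≠ 2) (hd : 1 ≤ d)
    (Ω : Type*) [Field Ω] [Algebra (ZMod p) Ω] [IsAlgClosure (ZMod p) Ω]
    (x : ℕ → Ω)
    (U : ℕ → IntermediateField (ZMod p) Ω)
    (hU : ∀ i, U i = IntermediateField.adjoin (ZMod p) (x '' Set.Iic i))
    (hdeg : Module.finrank (ZMod p) ↥(U 0) = d)
    (hx0 : x 0 ∈ U 0)
    (htr0 : Algebra.trace (ZMod p) ↥(U 0) ⟨x 0, hx0⟩ ≠ 0)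
    (hx1 : x 1 ^ p - x 1 = x 0)
    (hxi : ∀ i, 1 ≤ i → x (i + 1) ^ p - x (i + 1) = x i ^ (2 * p - 1)) :
    ∀ i, (ZMod p)⟮x i⟯ = U i ∧
      Module.finrank (ZMod p) ↥((ZMod p)⟮x i⟯) = p ^ i * d := by
  have : Algebra.IsAlgebraic (ZMod p) Ω := IsAlgClosure.isAlgebraic
  have : CharP Ω p := charP_of_injective_algebraMap (algebraMap (ZMod p) Ω).injective p
  have hprime : p.Prime := Fact.out
  have hp0 := hprime.pos
  have hU0 : U 0 = (ZMod p)⟮x 0⟯ := by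
    rw [hU 0, ← Nat.bot_eq_zero, Set.Iic_bot, Set.image_singleton]
  have hdeg0 : Module.finrank (ZMod p) ↥(ZMod p)⟮x 0⟯ = d := by rw [← hU0, hdeg]
  let γ : ℕ → Ω := fun i => if i = 0 then x 0 else x i ^ (2 * p - 1)
  have hγ : ∀ i, x (i + 1) ^ p - x (i + 1) = γ i := by
    intro i
    rcases Nat.eq_zero_or_pos i with rfl | hi
    · simpa [γ] using hx1
    · simpa [γ, hi.ne'] using hxi i hi
  have hγs : ∀ i, γ (i + 1) = x (i + 1) ^ (2 * p - 1) := fun i => by simp [γ]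
  have tower : ∀ i, ∃ c : ZMod p, c ≠ 0 ∧ HasFrobeniusTrace p (p ^ i * d) c (γ i) := by
    intro i
    induction i with
    | zero =>
      refine ⟨_, htr0, ?_, ?_⟩
      · simpa [γ, hdeg0] using pow_pow_finrank_adjoin_eq_self (p := p) (x 0)
      · have : FiniteDimensional (ZMod p) ↥(U 0) :=
          Module.finite_of_finrank_pos (by rw [hdeg]; lia)
        have : Finite ↥(U 0) := Module.finite_of_finite (ZMod p)
        have h := congrArg Subtype.val
          (FiniteField.algebraMap_trace_eq_sum_pow (ZMod p) ↥(U 0) ⟨x 0, hx0⟩)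
        rw [hdeg, Nat.card_zmod] at h
        simpa [γ] using h.symm
    | succ i ih =>
      obtain ⟨c, hc, h⟩ := ih
      refine ⟨-c, neg_ne_zero.2 hc, ?_⟩
      rw [hγs, show p ^ (i + 1) * d = p ^ i * d * p by ring]
      exact h.succ hodd hc (hγ i)
  have hfix : ∀ i, x i ^ p ^ (p ^ i * d) = x i := by
    intro i
    cases i with
    | zero => simpa [hdeg0] using pow_pow_finrank_adjoin_eq_self (p := p) (x 0)
    | succ i =>
      obtain ⟨c, hc, h⟩ := tower i
      rw [show p ^ (i + 1) * d = p ^ i * d * p by ring]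
      exact h.root_pow_mul_self (hγ i)
  have descend : ∀ m i, γ i ^ p ^ m = γ i → x 0 ^ p ^ m = x 0 := by
    intro m i
    induction i with
    | zero => simp [γ]
    | succ i ih =>
      intro h
      obtain ⟨c, hc, ht⟩ := tower i
      exact ih (ht.pow_eq_self_of_root hodd hc (hγ i) (by rwa [hγs] at h))
  have hle : ∀ i, (ZMod p)⟮x i⟯ ≤ U i := by
    intro i
    rw [hU i]
    exact adjoin.mono _ _ _ (by simpa using ⟨i, le_rfl, rfl⟩)
  have hrank : ∀ i, Module.finrank (ZMod p) ↥(ZMod p)⟮x i⟯ = p ^ i * d := by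
    intro i
    cases i with
    | zero => simpa using hdeg0
    | succ i =>
      have hself := pow_pow_finrank_adjoin_eq_self (p := p) (x (i + 1))
      have hdvd : Module.finrank (ZMod p) ↥(ZMod p)⟮x (i + 1)⟯ ∣ p ^ (i + 1) * d :=
        finrank_adjoin_dvd_of_pow_eq_self (Set.finite_singleton _) (by simpa using hfix (i + 1))
      set m := Module.finrank (ZMod p) ↥(ZMod p)⟮x (i + 1)⟯
      have hdm : d ∣ m := by
        rw [← hdeg0]
        refine finrank_adjoin_dvd_of_pow_eq_self (Set.finite_singleton _) ?_
        have : γ i ^ p ^ m = γ i := by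
          rw [← hγ i, sub_pow_char_pow, pow_right_comm, hself]
        simpa using descend m i this
      obtain ⟨q, hq⟩ := hdm
      rw [hq, mul_comm d q] at hdvd
      obtain ⟨k, hk, rfl⟩ := (Nat.dvd_prime_pow hprime).1 (Nat.dvd_of_mul_dvd_mul_right hd hdvd)
      rcases hk.eq_or_lt with rfl | hlt
      · rw [hq, mul_comm]
      · exfalso
        obtain ⟨c, hc, ht⟩ := tower i
        obtain ⟨r, hr⟩ : m ∣ p ^ i * d := by
          rw [hq, mul_comm d]
          exact Nat.mul_dvd_mul_right (pow_dvd_pow p (Nat.lt_succ_iff.1 hlt)) d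
        have hper : x (i + 1) ^ p ^ (m * r) = x (i + 1) := by
          rw [pow_mul]
          have := (show Function.IsFixedPt (fun t : Ω => t ^ p ^ m) (x (i + 1)) from hself).iterate r
          simpa [Function.IsFixedPt, pow_iterate] using this
        rw [← hr, ht.root_pow (hγ i)] at hper
        simp [hc] at hper
  intro i
  refine ⟨?_, hrank i⟩
  have hfin : (x '' Set.Iic i).Finite := (Set.finite_Iic i).image x
  have hdvd : Module.finrank (ZMod p) ↥(U i) ∣ p ^ i * d := by
    rw [hU i]
    refine finrank_adjoin_dvd_of_pow_eq_self hfin ?_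
    rintro _ ⟨j, hj, rfl⟩
    obtain ⟨r, hr⟩ : p ^ j * d ∣ p ^ i * d := Nat.mul_dvd_mul_right (pow_dvd_pow p hj) d
    have := (show Function.IsFixedPt (fun t : Ω => t ^ p ^ (p ^ j * d)) (x j) from hfix j).iterate r
    rw [hr, pow_mul p]
    simpa [Function.IsFixedPt, pow_iterate] using this
  have hpos : 0 < p ^ i * d := by positivity
  have : FiniteDimensional (ZMod p) ↥(U i) :=
    Module.finite_of_finrank_pos (Nat.pos_of_dvd_of_pos hdvd hpos)
  exact eq_of_le_of_finrank_le (hle i) (by rw [hrank i]; exact Nat.le_of_dvd hpos hdvd)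
end

section
/- Let Ω be an algebraic closure of F_2 and let d ≥ 2 be even. Fix x_0 ∈ Ω such that U_0 = F_2(x_0) has degree d over F_2 and Tr_{U_0/F_2}(x_0) ≠ 0. Let x_1, x_2, … ∈ Ω satisfy x_1^2 + x_1 = x_0 and x_i^2 + x_i = x_{i−1}^3 for all i ≥ 2. Then for every i ≥ 0 the element x_i generates F_2(x_0, …, x_i) over F_2, and [F_2(x_i) : F_2] = 2^i · d. -/
open IntermediateField

section ArtinSchreierTwo

variable {F : Type*} [Field F] [CharP F 2]

/-- Iterating the Frobenius on a root `x` of `X² + X = y`. -/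
lemma pow_two_pow_eq_add_sum {x y : F} (h : x ^ 2 + x = y) (m : ℕ) :
    x ^ 2 ^ m = x + ∑ j ∈ Finset.range m, y ^ 2 ^ j := by
  induction m with
  | zero => simp
  | succ m ih =>
    have hx : x ^ 2 = x + y := by
      rw [← h]; linear_combination -(x * CharTwo.two_eq_zero (R := F))
    rw [pow_succ', pow_mul, hx, add_pow_char_pow, ih, Finset.sum_range_succ, add_assoc]

lemma pow_two_pow_mul_eq_add_natCast {x : F} {n : ℕ} (h : x ^ 2 ^ n = x + 1) (k : ℕ) :
    x ^ 2 ^ (n * k) = x + k := by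
  induction k with
  | zero => simp
  | succ k ih =>
    rw [Nat.mul_succ, pow_add, pow_mul, ih, add_pow_char_pow, h]
    have hk : (k : F) ^ 2 ^ n = k := by
      rcases Nat.even_or_odd k with hk | hk
      · rw [CharTwo.natCast_eq_ite, if_pos hk, zero_pow (by positivity)]
      · rw [CharTwo.natCast_eq_ite, if_neg (Nat.not_even_iff_odd.mpr hk), one_pow]
    rw [hk]; push_cast; ring

/-- If `y` has degree `n` over `𝔽₂` and absolute trace one, every root of `X² + X = y` has
degree `2 * n`. -/
lemma pow_two_pow_eq_self_iff_two_mul_dvd {x y : F} {n : ℕ} (h : x ^ 2 + x = y)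
    (hy : ∀ m, y ^ 2 ^ m = y ↔ n ∣ m) (htr : ∑ j ∈ Finset.range n, y ^ 2 ^ j = 1) (m : ℕ) :
    x ^ 2 ^ m = x ↔ 2 * n ∣ m := by
  have hn : x ^ 2 ^ n = x + 1 := by rw [pow_two_pow_eq_add_sum h, htr]
  have key (k : ℕ) : x ^ 2 ^ (n * k) = x ↔ 2 ∣ k := by
    rw [pow_two_pow_mul_eq_add_natCast hn, add_eq_left, CharP.cast_eq_zero_iff F 2]
  constructor
  · intro hm
    obtain ⟨k, rfl⟩ := (hy m).1 <| by
      rw [← h, add_pow_char_pow, ← pow_mul, mul_comm, pow_mul, hm]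
    rw [mul_comm 2]
    exact mul_dvd_mul_left n ((key k).1 hm)
  · rintro ⟨k, rfl⟩
    rw [mul_comm 2, mul_assoc, key]
    exact dvd_mul_right 2 k

lemma sum_range_two_mul_cube_pow_two_pow {x y : F} {n : ℕ} (h : x ^ 2 + x = y) (hn : Even n)
    (htr : ∑ j ∈ Finset.range n, y ^ 2 ^ j = 1) :
    ∑ j ∈ Finset.range (2 * n), (x ^ 3) ^ 2 ^ j = 1 := by
  have hxn : x ^ 2 ^ n = x + 1 := by rw [pow_two_pow_eq_add_sum h, htr]
  have hterm (j : ℕ) : (x ^ 3) ^ 2 ^ j + (x ^ 3) ^ 2 ^ (n + j) = y ^ 2 ^ j + 1 := by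
    have h3 : x ^ 3 + (x + 1) ^ 3 = y + 1 := by
      rw [← h]; linear_combination (x ^ 3 + x ^ 2 + x) * CharTwo.two_eq_zero (R := F)
    rw [pow_add 2 n j, pow_mul (x ^ 3), ← pow_mul x 3 (2 ^ n), mul_comm 3, pow_mul x, hxn,
      ← add_pow_char_pow, h3, add_pow_char_pow, one_pow]
  rw [two_mul, Finset.sum_range_add, ← Finset.sum_add_distrib,
    Finset.sum_congr rfl fun j _ => hterm j, Finset.sum_add_distrib, htr]
  simp [CharTwo.natCast_eq_ite, hn]

/-- If `y` has even degree `n` over `𝔽₂` and absolute trace one, the cube of a root of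
`X² + X = y` has the same degree `2 * n` as the root. -/
lemma cube_pow_two_pow_eq_self_iff_two_mul_dvd {x y : F} {n : ℕ} (h : x ^ 2 + x = y)
    (hn : Even n) (hy : ∀ m, y ^ 2 ^ m = y ↔ n ∣ m)
    (htr : ∑ j ∈ Finset.range n, y ^ 2 ^ j = 1) (m : ℕ) :
    (x ^ 3) ^ 2 ^ m = x ^ 3 ↔ 2 * n ∣ m := by
  have hx := pow_two_pow_eq_self_iff_two_mul_dvd h hy htr
  refine ⟨fun hm => ?_, fun hm => by rw [← pow_mul, mul_comm, pow_mul, (hx m).2 hm]⟩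
  have hx0 : x ≠ 0 := by
    rintro rfl
    rw [← h] at htr
    simp at htr
  obtain ⟨w, hw⟩ : ∃ w, x ^ 2 ^ m = w * x := ⟨x ^ 2 ^ m / x, by field_simp⟩
  have hw3 : w ^ 3 = 1 := by
    rw [← pow_mul, mul_comm, pow_mul, hw, mul_pow] at hm
    exact mul_right_cancel₀ (pow_ne_zero 3 hx0) (hm.trans (one_mul _).symm)
  by_cases hw1 : w = 1
  · exact (hx m).1 (by rw [hw, hw1, one_mul])
  have hw2 : w ^ 2 + w + 1 = 0 := by
    refine (mul_eq_zero.1 ?_).resolve_left (sub_ne_zero.2 hw1)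
    linear_combination hw3
  have hw4 : w ^ 2 ^ 2 = w := by linear_combination w * hw3
  have heven (k : ℕ) : w ^ 2 ^ (2 * k) = w := by
    induction k with
    | zero => simp
    | succ k ih => rw [Nat.mul_succ, pow_add, pow_mul, ih, hw4]
  exfalso
  obtain ⟨k, rfl | rfl⟩ := Nat.even_or_odd' m
  · have hym : y ^ 2 ^ (2 * k) = w ^ 2 * x ^ 2 + w * x := by
      rw [← h, add_pow_char_pow, ← pow_mul, mul_comm, pow_mul, hw]; ring
    have hymm : (y ^ 2 ^ (2 * k)) ^ 2 ^ (2 * k) = w ^ 4 * x ^ 2 + w ^ 2 * x := by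
      rw [hym, add_pow_char_pow, mul_pow, mul_pow, ← pow_mul w, ← pow_mul x, mul_comm 2 (2 ^ _),
        pow_mul w, pow_mul x, hw, heven]
      ring
    have hsum : y + y ^ 2 ^ (2 * k) + (y ^ 2 ^ (2 * k)) ^ 2 ^ (2 * k) = 0 := by
      rw [hymm, hym, ← h]
      linear_combination (x ^ 2 * (w ^ 2 - w + 1) + x) * hw2
    have htrace (a : F) (ha : ∑ j ∈ Finset.range n, a ^ 2 ^ j = 1) :
        ∑ j ∈ Finset.range n, (a ^ 2 ^ (2 * k)) ^ 2 ^ j = 1 := by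
      simp_rw [← pow_mul a, mul_comm (2 ^ (2 * k)), pow_mul a]
      rw [← sum_pow_char_pow, ha, one_pow]
    have hzero : ∑ j ∈ Finset.range n,
        (y + y ^ 2 ^ (2 * k) + (y ^ 2 ^ (2 * k)) ^ 2 ^ (2 * k)) ^ 2 ^ j = 0 := by
      rw [hsum]; simp
    simp_rw [add_pow_char_pow] at hzero
    rw [Finset.sum_add_distrib, Finset.sum_add_distrib, htr, htrace y htr,
      htrace _ (htrace y htr), CharTwo.add_self_eq_zero, zero_add] at hzero
    exact one_ne_zero hzero
  · have hfix : x ^ 2 ^ ((2 * k + 1) + (2 * k + 1)) = x := by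
      rw [pow_add 2, pow_mul, hw, mul_pow, hw, pow_succ 2, pow_mul, heven]
      linear_combination x * hw3
    have hdvd := (hx _).1 hfix
    rw [← two_mul] at hdvd
    have := hn.two_dvd.trans (Nat.dvd_of_mul_dvd_mul_left two_pos hdvd)
    omega

end ArtinSchreierTwo

section Degree

variable {Ω : Type*} [Field Ω] [Algebra (ZMod 2) Ω]

lemma pow_two_pow_eq_self_iff_finrank_dvd [Algebra.IsAlgebraic (ZMod 2) Ω] (a : Ω) (m : ℕ) :
    a ^ 2 ^ m = a ↔ Module.finrank (ZMod 2) (ZMod 2)⟮a⟯ ∣ m := by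
  have : FiniteDimensional (ZMod 2) (ZMod 2)⟮a⟯ :=
    adjoin.finiteDimensional (Algebra.IsIntegral.isIntegral a)
  have : Finite (ZMod 2)⟮a⟯ := Module.finite_of_finite (ZMod 2)
  rw [← FiniteField.orderOf_frobeniusAlgHom (ZMod 2) (ZMod 2)⟮a⟯, orderOf_dvd_iff_pow_eq_one]
  have hpow : ((FiniteField.frobeniusAlgHom (ZMod 2) (ZMod 2)⟮a⟯ ^ m)
      (AdjoinSimple.gen (ZMod 2) a) : Ω) = a ^ 2 ^ m := by
    rw [AlgHom.coe_pow, FiniteField.coe_frobeniusAlgHom, pow_iterate]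
    simp
  constructor
  · intro h
    refine adjoin_algHom_ext (ZMod 2) fun z hz => ?_
    obtain rfl := Set.mem_singleton_iff.1 hz
    exact Subtype.ext (hpow.trans h)
  · intro h
    rw [← hpow, h]
    rfl

lemma adjoin_simple_le_of_sq_add_self {x y : Ω} (h : x ^ 2 + x = y) :
    (ZMod 2)⟮y⟯ ≤ (ZMod 2)⟮x⟯ := by
  rw [adjoin_simple_le_iff, ← h]
  have hx := mem_adjoin_simple_self (ZMod 2) x
  exact add_mem (pow_mem hx 2) hx

end Degree

/-- Let `Ω` be an algebraic closure of `F_2` and let `d ≥ 2` be even. Fix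
`x_0 ∈ Ω` with `U_0 = F_2(x_0)` of degree `d` over `F_2` and `Tr_{U_0/F_2}(x_0) ≠ 0`. Let
`x_1, x_2, … ∈ Ω` satisfy `x_1² + x_1 = x_0` and `x_i² + x_i = x_{i−1}³` for all `i ≥ 2`.
Then for every `i ≥ 0` the element `x_i` generates `F_2(x_0, …, x_i)` over `F_2`, and
`[F_2(x_i) : F_2] = 2^i · d`. -/
theorem cantor_tower_char_two_even_degree_is_primitive
    (d : ℕ) (hd2 : 2 ≤ d) (hdeven : Even d)
    (Ω : Type*) [Field Ω] [Algebra (ZMod 2) Ω] [IsAlgClosure (ZMod 2) Ω]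
    (x : ℕ → Ω)
    (U : ℕ → IntermediateField (ZMod 2) Ω)
    (hU : ∀ i, U i = IntermediateField.adjoin (ZMod 2) (x '' Set.Iic i))
    (hdeg : Module.finrank (ZMod 2) ↥(U 0) = d)
    (hx0 : x 0 ∈ U 0)
    (htr0 : Algebra.trace (ZMod 2) ↥(U 0) ⟨x 0, hx0⟩ ≠ 0)
    (hx1 : x 1 ^ 2 + x 1 = x 0)
    (hxi : ∀ i, 1 ≤ i → x (i + 1) ^ 2 + x (i + 1) = x i ^ 3) :
    ∀ i, (ZMod 2)⟮x i⟯ = U i ∧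
      Module.finrank (ZMod 2) ↥((ZMod 2)⟮x i⟯) = 2 ^ i * d := by
  have : Algebra.IsAlgebraic (ZMod 2) Ω := IsAlgClosure.isAlgebraic
  have : CharP Ω 2 := charP_of_injective_algebraMap (algebraMap (ZMod 2) Ω).injective 2
  have hU0 : (ZMod 2)⟮x 0⟯ = U 0 := by
    rw [hU, show Set.Iic 0 = {0} from Set.Iic_bot, Set.image_singleton]
  have hdeg0 : Module.finrank (ZMod 2) (ZMod 2)⟮x 0⟯ = d := by rw [hU0, hdeg]
  have hfix0 (m : ℕ) : x 0 ^ 2 ^ m = x 0 ↔ d ∣ m := by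
    rw [pow_two_pow_eq_self_iff_finrank_dvd, hdeg0]
  have htr0' : ∑ j ∈ Finset.range d, x 0 ^ 2 ^ j = 1 := by
    have hfin : FiniteDimensional (ZMod 2) (U 0) :=
      Module.finite_of_finrank_pos (by omega)
    have hfinite : Finite (U 0) := Module.finite_of_finite (ZMod 2)
    have htr1 : Algebra.trace (ZMod 2) (U 0) ⟨x 0, hx0⟩ = 1 :=
      Fin.eq_one_of_ne_zero _ htr0
    have := congrArg (fun z : U 0 => (z : Ω))
      (FiniteField.algebraMap_trace_eq_sum_pow (ZMod 2) (U 0) ⟨x 0, hx0⟩)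
    simpa [htr1, hdeg] using this.symm
  have step (i : ℕ) :
      (∀ m, x (i + 1) ^ 2 ^ m = x (i + 1) ↔ 2 ^ (i + 1) * d ∣ m) ∧
      (∀ m, (x (i + 1) ^ 3) ^ 2 ^ m = x (i + 1) ^ 3 ↔ 2 ^ (i + 1) * d ∣ m) ∧
      ∑ j ∈ Finset.range (2 ^ (i + 1) * d), (x (i + 1) ^ 3) ^ 2 ^ j = 1 := by
    induction i with
    | zero =>
      rw [zero_add, pow_one]
      exact ⟨pow_two_pow_eq_self_iff_two_mul_dvd hx1 hfix0 htr0',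
        cube_pow_two_pow_eq_self_iff_two_mul_dvd hx1 hdeven hfix0 htr0',
        sum_range_two_mul_cube_pow_two_pow hx1 hdeven htr0'⟩
    | succ i ih =>
      obtain ⟨-, hfix, htr⟩ := ih
      have h := hxi (i + 1) (by omega)
      have heven : Even (2 ^ (i + 1) * d) := hdeven.mul_left _
      rw [pow_succ' 2 (i + 1), mul_assoc]
      exact ⟨pow_two_pow_eq_self_iff_two_mul_dvd h hfix htr,
        cube_pow_two_pow_eq_self_iff_two_mul_dvd h heven hfix htr,
        sum_range_two_mul_cube_pow_two_pow h heven htr⟩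
  have finrank_eq {a : Ω} {n : ℕ} (h : ∀ m, a ^ 2 ^ m = a ↔ n ∣ m) :
      Module.finrank (ZMod 2) (ZMod 2)⟮a⟯ = n :=
    Nat.dvd_antisymm ((pow_two_pow_eq_self_iff_finrank_dvd a n).1 ((h n).2 dvd_rfl))
      ((h _).1 ((pow_two_pow_eq_self_iff_finrank_dvd a _).2 dvd_rfl))
  have hmono : Monotone fun i => (ZMod 2)⟮x i⟯ := by
    refine monotone_nat_of_le_succ fun i => ?_
    cases i with
    | zero => exact adjoin_simple_le_of_sq_add_self hx1
    | succ i =>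
      have : FiniteDimensional (ZMod 2) (ZMod 2)⟮x (i + 1)⟯ :=
        adjoin.finiteDimensional (Algebra.IsIntegral.isIntegral _)
      have hcube : (ZMod 2)⟮x (i + 1) ^ 3⟯ = (ZMod 2)⟮x (i + 1)⟯ :=
        eq_of_le_of_finrank_eq
          (adjoin_simple_le_iff.2 (pow_mem (mem_adjoin_simple_self _ _) 3))
          ((finrank_eq (step i).2.1).trans (finrank_eq (step i).1).symm)
      exact hcube.symm.trans_le (adjoin_simple_le_of_sq_add_self (hxi (i + 1) (by omega)))
  intro i
  refine ⟨?_, ?_⟩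
  · rw [hU]
    refine le_antisymm (adjoin.mono _ _ _ ?_) (adjoin_le_iff.2 ?_)
    · exact Set.singleton_subset_iff.2 ⟨i, Set.self_mem_Iic, rfl⟩
    · rintro _ ⟨j, hj, rfl⟩
      exact hmono hj (mem_adjoin_simple_self _ _)
  · cases i with
    | zero => rw [pow_zero, one_mul, hdeg0]
    | succ i => exact finrank_eq (step i).1
end

section
/- Let p be a prime, let Φ ∈ F_p[X] be the reduction modulo p of the (2p−1)-th cyclotomic polynomial, let A = F_p[X]/(Φ), and let x = X mod Φ ∈ A. For a polynomial Q ∈ F_p[Y], define Q* = ∏_{i=0}^{2p−2} Q(x^i · Y) ∈ A[Y]. Then every coefficient of Q* lies in the image of F_p in A (so Q* is the image of a polynomial in F_p[Y]), and moreover there exists q* ∈ F_p[Y] such that Q* = q*(Y^{2p−1}); that is, every coefficient of Q* in a degree not divisible by 2p−1 is zero. -/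
open Polynomial

namespace Polynomial

/-- Over an arbitrary commutative ring, the powers of a root of the `n`-th cyclotomic polynomial
factor `X ^ n - 1`. -/
theorem prod_range_X_sub_C_pow_of_isRoot_cyclotomic {B : Type*} [CommRing B] {n : ℕ}
    (hn : 0 < n) {x : B} (hx : (cyclotomic n B).IsRoot x) :
    ∏ i ∈ Finset.range n, (X - C (x ^ i)) = (X ^ n - 1 : B[X]) := by
  have hprime : Prime (cyclotomic n ℤ) := (cyclotomic.irreducible hn).prime
  have := AdjoinRoot.isDomain_of_prime hprime
  have : CharZero (AdjoinRoot (cyclotomic n ℤ)) :=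
    charZero_of_injective_ringHom (AdjoinRoot.of.injective_of_degree_ne_zero
      (degree_cyclotomic_pos n ℤ hn).ne')
  have hroot : IsPrimitiveRoot (AdjoinRoot.root (cyclotomic n ℤ)) n := by
    rw [← isRoot_cyclotomic_iff_charZero hn, ← map_cyclotomic n (AdjoinRoot.of (cyclotomic n ℤ))]
    exact AdjoinRoot.isRoot_root _
  let φ : AdjoinRoot (cyclotomic n ℤ) →+* B :=
    AdjoinRoot.lift (Int.castRingHom B) x (by rwa [← eval_map, map_cyclotomic])
  have hφ : φ (AdjoinRoot.root (cyclotomic n ℤ)) = x := AdjoinRoot.lift_root _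
  simpa [Polynomial.map_prod, hφ] using
    (congrArg (map φ) (X_pow_sub_C_eq_prod hroot hn (one_pow n))).symm

/-- The product of the values of a polynomial at the powers of a root of the `n`-th cyclotomic
polynomial lies in the base ring. -/
theorem prod_range_eval_pow_mem_range {R B : Type*} [CommRing R] [CommRing B] (φ : R →+* B)
    {n : ℕ} (hn : 0 < n) {x : B} (hx : (cyclotomic n B).IsRoot x) (g : R[X]) :
    ∏ i ∈ Finset.range n, (g.map φ).eval (x ^ i) ∈ φ.range := by
  nontriviality B
  refine ⟨resultant (X ^ n - 1) g n g.natDegree, ?_⟩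
  have hfactor := prod_range_X_sub_C_pow_of_isRoot_cyclotomic hn hx
  have hres := resultant_prod_left (Finset.range n) (fun i ↦ X - C (x ^ i)) (g.map φ)
    g.natDegree (by simp [-map_pow]) natDegree_map_le
  have hdeg : (X ^ n - 1 : B[X]).natDegree = n := by
    simpa using natDegree_X_pow_sub_C (n := n) (r := (1 : B))
  simp only [hfactor, hdeg, natDegree_X_sub_C,
    resultant_X_sub_C_left _ _ _ (natDegree_map_le (f := φ) (p := g))] at hres
  rw [← hres, hfactor, ← resultant_map_map, Polynomial.map_sub, Polynomial.map_pow, map_X,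
    Polynomial.map_one]

/-- The product of the `Q (x ^ i * Y)`, for `x` a root of the `n`-th cyclotomic polynomial, has
coefficients in the base ring. -/
theorem prod_range_comp_C_pow_mul_X_mem_range {R B : Type*} [CommRing R] [CommRing B]
    (φ : R →+* B) {n : ℕ} (hn : 0 < n) {x : B} (hx : (cyclotomic n B).IsRoot x) (Q : R[X]) :
    ∏ i ∈ Finset.range n, (Q.map φ).comp (C (x ^ i) * X) ∈ (mapRingHom φ).range := by
  have hCx : (cyclotomic n B[X]).IsRoot (C x) := by
    rw [← map_cyclotomic n (C : B →+* B[X])]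
    exact hx.map
  convert prod_range_eval_pow_mem_range (mapRingHom φ) hn hCx
    ((Q.map C).comp (X * C X)) using 2 with i
  rw [comp, ← eval_map, Polynomial.map_comp, eval_comp, Polynomial.map_map, Polynomial.map_map,
    mapRingHom_comp_C]
  simp [mul_comm X]

/-- The product of the `Q (x ^ i * Y)` over a period of the powers of `x` is invariant under
`Y ↦ x * Y`. -/
theorem prod_range_comp_C_pow_mul_X_comp {B : Type*} [CommRing B] {n : ℕ} {x : B}
    (hx : x ^ n = 1) (Q : B[X]) :
    (∏ i ∈ Finset.range n, Q.comp (C (x ^ i) * X)).comp (C x * X) =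
      ∏ i ∈ Finset.range n, Q.comp (C (x ^ i) * X) := by
  have hshift : ∀ i, (Q.comp (C (x ^ i) * X)).comp (C x * X) = Q.comp (C (x ^ (i + 1)) * X) := by
    intro i
    simp [comp_assoc, pow_succ, mul_assoc]
  cases n with
  | zero => simp
  | succ m =>
    rw [prod_comp, Finset.prod_congr rfl fun i _ ↦ hshift i, Finset.prod_range_succ,
      Finset.prod_range_succ' _ m, hx, pow_zero]

theorem expand_contract_of_coeff_eq_zero {R : Type*} [CommSemiring R] {n : ℕ} (hn : 0 < n)
    {f : R[X]} (hf : ∀ k, ¬ n ∣ k → f.coeff k = 0) : expand R n (contract n f) = f := by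
  ext k
  rw [coeff_expand hn, coeff_contract hn.ne']
  split_ifs with h
  · rw [Nat.div_mul_cancel h]
  · exact (hf k h).symm

end Polynomial

/-- The class of `X` modulo the `n`-th cyclotomic polynomial over a field in which `n ≠ 0` is a
primitive `n`-th root of unity. -/
theorem AdjoinRoot.isPrimitiveRoot_root_cyclotomic {K : Type*} [Field K] {n : ℕ}
    [NeZero (n : K)] : IsPrimitiveRoot (AdjoinRoot.root (cyclotomic n K)) n := by
  have hn : 0 < n := (NeZero.of_neZero_natCast K).out.bot_lt
  refine ⟨?_, fun k hk ↦ ?_⟩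
  · rw [← sub_eq_zero, ← AdjoinRoot.mk_X, ← map_pow, ← map_one (AdjoinRoot.mk (cyclotomic n K)),
      ← map_sub, AdjoinRoot.mk_eq_zero]
    exact cyclotomic.dvd_X_pow_sub_one n K
  · obtain ⟨μ, hμ⟩ := IsAlgClosed.exists_aeval_eq_zero (AlgebraicClosure K) (cyclotomic n K)
      (degree_cyclotomic_pos n K hn).ne'
    have : NeZero (n : AlgebraicClosure K) :=
      NeZero.nat_of_injective (algebraMap K (AlgebraicClosure K)).injective
    have hprim : IsPrimitiveRoot μ n := by
      rw [← isRoot_cyclotomic_iff, ← map_cyclotomic n (algebraMap K (AlgebraicClosure K)),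
        IsRoot, eval_map_algebraMap, hμ]
    apply hprim.dvd_of_pow_eq_one
    rw [aeval_def] at hμ
    simpa using congrArg (AdjoinRoot.lift (algebraMap K (AlgebraicClosure K)) μ hμ) hk

/-- Let `p` be a prime, `Φ ∈ F_p[X]` the reduction mod `p` of the
`(2p−1)`-th cyclotomic polynomial, `A = F_p[X]/(Φ)` and `x = X mod Φ ∈ A`. For `Q ∈ F_p[Y]`,
let `Q* = ∏_{i=0}^{2p−2} Q(x^i · Y) ∈ A[Y]`. Then every coefficient of `Q*` lies in the image
of `F_p` in `A`, and there exists `q* ∈ F_p[Y]` with `Q* = q*(Y^(2p−1))`. -/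
theorem cyclotomic_product_descends
    (p : ℕ) [Fact p.Prime]
    (Q : Polynomial (ZMod p))
    (Qstar : Polynomial (AdjoinRoot (cyclotomic (2 * p - 1) (ZMod p))))
    (hQstar : Qstar = ∏ i ∈ Finset.range (2 * p - 1),
      (Q.map (algebraMap (ZMod p) (AdjoinRoot (cyclotomic (2 * p - 1) (ZMod p))))).comp
        (C ((AdjoinRoot.root (cyclotomic (2 * p - 1) (ZMod p))) ^ i) * X)) :
    (∀ k : ℕ, Qstar.coeff k ∈
        Set.range (algebraMap (ZMod p) (AdjoinRoot (cyclotomic (2 * p - 1) (ZMod p))))) ∧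
      ∃ qstar : Polynomial (ZMod p),
        Qstar = (qstar.map
            (algebraMap (ZMod p) (AdjoinRoot (cyclotomic (2 * p - 1) (ZMod p))))).comp
          (X ^ (2 * p - 1)) := by
  have hp : p.Prime := Fact.out
  have hn : 0 < 2 * p - 1 := by have := hp.two_le; omega
  have : NeZero ((2 * p - 1 : ℕ) : ZMod p) := ⟨by
    rw [Nat.cast_sub (by have := hp.two_le; omega)]
    simp⟩
  have hprim := AdjoinRoot.isPrimitiveRoot_root_cyclotomic (K := ZMod p) (n := 2 * p - 1)
  have hroot : (cyclotomic (2 * p - 1) (AdjoinRoot (cyclotomic (2 * p - 1) (ZMod p)))).IsRoot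
      (AdjoinRoot.root (cyclotomic (2 * p - 1) (ZMod p))) := by
    rw [← map_cyclotomic (2 * p - 1) (AdjoinRoot.of (cyclotomic (2 * p - 1) (ZMod p)))]
    exact AdjoinRoot.isRoot_root _
  obtain ⟨q, hq⟩ := prod_range_comp_C_pow_mul_X_mem_range
    (algebraMap (ZMod p) (AdjoinRoot (cyclotomic (2 * p - 1) (ZMod p)))) hn hroot Q
  rw [← hQstar, coe_mapRingHom] at hq
  have hinv : Qstar.comp (C (AdjoinRoot.root (cyclotomic (2 * p - 1) (ZMod p))) * X) = Qstar := by
    rw [hQstar]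
    exact prod_range_comp_C_pow_mul_X_comp hprim.pow_eq_one _
  have hcoeff : ∀ k, ¬ (2 * p - 1) ∣ k → q.coeff k = 0 := by
    intro k hk
    by_contra hne
    refine hk (hprim.dvd_of_pow_eq_one k ?_)
    have hunit := (isUnit_iff_ne_zero.mpr hne).map
      (algebraMap (ZMod p) (AdjoinRoot (cyclotomic (2 * p - 1) (ZMod p))))
    have hk' := congrArg (coeff · k) hinv
    simp only [comp_C_mul_X_coeff, ← hq, coeff_map] at hk'
    exact hunit.mul_eq_left.mp hk'
  refine ⟨fun k ↦ ⟨q.coeff k, by rw [← hq, coeff_map]⟩, contract (2 * p - 1) q, ?_⟩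
  rw [← expand_eq_comp_X_pow, ← map_expand, expand_contract_of_coeff_eq_zero hn hcoeff, hq]
end

section
/- In the Cantor tower over F_p with p odd, let i ≥ 1, let Q_i ∈ F_p[Y] be the minimal polynomial of x_i over F_p, and let q_i* ∈ F_p[Y] be the polynomial such that ∏_{j=0}^{2p−2} Q_i(x^j · Y) = q_i*(Y^{2p−1}) in A[Y], where A = F_p[X]/(Φ), Φ is the reduction modulo p of the (2p−1)-th cyclotomic polynomial, and x = X mod Φ. Then the minimal polynomial of x_{i+1} over F_p is q_i*(Y^p − Y). -/
open IntermediateField Polynomial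

theorem sum_range_mul_eq_sum_sum {M : Type*} [AddCommMonoid M] (f : ℕ → M) (m s : ℕ) :
    ∑ k ∈ Finset.range (m * s), f k =
      ∑ j ∈ Finset.range s, ∑ r ∈ Finset.range m, f (m * j + r) := by
  induction s with
  | zero => simp
  | succ s ih => rw [Nat.mul_succ, Finset.sum_range_add, ih, Finset.sum_range_succ]

theorem pow_char_pow_mul_of_fixed {K : Type*} [Monoid K] {p : ℕ} {γ : K} {m : ℕ}
    (h : γ ^ p ^ m = γ) (s : ℕ) :
    γ ^ p ^ (m * s) = γ := by
  induction s with
  | zero => simp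
  | succ s ih => rw [Nat.mul_succ, pow_add, pow_mul, ih, h]

theorem sum_pow_char_pow_of_fixed {K : Type*} [Semiring K] {p : ℕ} {γ : K} {m : ℕ}
    (h : γ ^ p ^ m = γ) (s : ℕ) :
    ∑ k ∈ Finset.range (m * s), γ ^ p ^ k = s * ∑ k ∈ Finset.range m, γ ^ p ^ k := by
  rw [sum_range_mul_eq_sum_sum]
  simp_rw [pow_add p, pow_mul γ, pow_char_pow_mul_of_fixed h]
  simp

theorem pow_two_mul_char_sub_one_of_artinSchreier {K : Type*} [Field K] {p : ℕ} [Fact p.Prime]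
    {x γ : K} (h : x ^ p - x = γ) (hγ : γ ≠ 0) :
    x ^ (2 * p - 1) = x + γ + γ * x ^ (p - 1) := by
  have hp : 0 < p := (Fact.out : p.Prime).pos
  have hx : x ≠ 0 := by
    rintro rfl
    exact hγ (by simpa [hp.ne'] using h.symm)
  have h₁ : x ^ (2 * p - 1) * x = (x ^ p) ^ 2 := by
    rw [← pow_succ, ← pow_mul]
    congr 1
    omega
  have h₂ : x ^ (p - 1) * x = x ^ p := by
    rw [← pow_succ, Nat.sub_add_cancel hp]
  apply mul_right_cancel₀ hx
  rw [h₁]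
  linear_combination (x ^ p + x) * h - γ * h₂

/-- `γ` has exact Frobenius period `m`, and its trace, the sum over one period, is nonzero. -/
def IsFrobeniusNormal {K : Type*} [Field K] (p : ℕ) (γ : K) (m : ℕ) : Prop :=
  (∀ k, γ ^ p ^ k = γ ↔ m ∣ k) ∧ ∑ k ∈ Finset.range m, γ ^ p ^ k ≠ 0

theorem IsFrobeniusNormal.ne_zero {K : Type*} [Field K] {p : ℕ} [Fact p.Prime] {γ : K}
    {m : ℕ} (h : IsFrobeniusNormal p γ m) : γ ≠ 0 := by
  rintro rfl
  exact h.2 (Finset.sum_eq_zero fun k _ ↦ zero_pow (pow_ne_zero _ (Fact.out : p.Prime).ne_zero))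

section FrobeniusSums

variable {K : Type*} [Field K] {p : ℕ} [Fact p.Prime] [CharP K p]

theorem sum_pow_char_pow_pow_char {γ : K} {m : ℕ} (h : γ ^ p ^ m = γ) :
    (∑ k ∈ Finset.range m, γ ^ p ^ k) ^ p = ∑ k ∈ Finset.range m, γ ^ p ^ k := by
  rw [sum_pow_char p]
  simp_rw [← pow_mul, ← pow_succ]
  have h₁ := Finset.sum_range_succ (fun k ↦ γ ^ p ^ k) m
  rw [Finset.sum_range_succ', h] at h₁
  simpa using h₁

theorem pow_char_pow_of_artinSchreier {x γ : K} (h : x ^ p - x = γ) (k : ℕ) :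
    x ^ p ^ k = x + ∑ j ∈ Finset.range k, γ ^ p ^ j := by
  induction k with
  | zero => simp
  | succ k ih =>
    rw [pow_succ', pow_mul, sub_eq_iff_eq_add'.mp h, add_pow_char_pow, ih,
      Finset.sum_range_succ, add_assoc]

theorem sum_range_char_natCast_pow (j : ℕ) (hj : j < p) :
    ∑ s ∈ Finset.range p, (s : K) ^ j = if j = p - 1 then -1 else 0 := by
  have hp : p.Prime := Fact.out
  have h₁ : ∑ s ∈ Finset.range p, (s : ZMod p) ^ j = ∑ a : ZMod p, a ^ j := by
    refine Finset.sum_bij' (fun s _ ↦ (s : ZMod p)) (fun a _ ↦ a.val) ?_ ?_ ?_ ?_ ?_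
    · simp
    · intro a _
      exact Finset.mem_range.mpr a.val_lt
    · intro s hs
      exact ZMod.val_cast_of_lt (Finset.mem_range.mp hs)
    · simp
    · simp
  have h₂ : ∑ a : ZMod p, a ^ j = if j = p - 1 then -1 else 0 := by
    split_ifs with h
    · subst h
      simp_rw [ZMod.pow_card_sub_one]
      rw [Finset.sum_ite, Finset.sum_const_zero, add_zero, Finset.sum_const,
        Finset.filter_ne', Finset.card_erase_of_mem (Finset.mem_univ _), Finset.card_univ,
        ZMod.card, nsmul_one, Nat.cast_sub hp.one_le]
      simp
    · apply FiniteField.sum_pow_lt_card_sub_one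
      rw [ZMod.card]
      omega
  have h₃ := congrArg (ZMod.castHom (dvd_refl p) K) (h₁.trans h₂)
  simpa [apply_ite] using h₃

theorem sum_range_char_add_mul_pow (x : K) {T : K} (hT : T ≠ 0) (hTp : T ^ p = T) :
    ∑ s ∈ Finset.range p, (x + s * T) ^ (p - 1) = -1 := by
  have hp : p.Prime := Fact.out
  have hT' : T ^ (p - 1) = 1 := by
    apply mul_right_cancel₀ hT
    rw [← pow_succ, Nat.sub_add_cancel hp.one_le, hTp, one_mul]
  simp_rw [add_comm x, add_pow]
  rw [Finset.sum_comm, Nat.sub_add_cancel hp.one_le]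
  have h : ∀ j ∈ Finset.range p,
      ∑ s ∈ Finset.range p, ((s : K) * T) ^ j * x ^ (p - 1 - j) * ((p - 1).choose j : K) =
        if j = p - 1 then -1 else 0 := by
    intro j hj
    simp_rw [mul_pow, mul_assoc]
    rw [← Finset.sum_mul, sum_range_char_natCast_pow j (Finset.mem_range.mp hj)]
    split_ifs with hj'
    · subst hj'
      simp [hT']
    · simp
  rw [Finset.sum_congr rfl h, Finset.sum_ite_eq']
  simp [hp.pos]

theorem sum_range_char_add_mul_pow_two_mul_sub_one (hp2 : p ≠ 2) {x γ T : K}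
    (h : x ^ p - x = γ) (hγ : γ ≠ 0) (hT : T ≠ 0) (hTp : T ^ p = T) :
    ∑ s ∈ Finset.range p, (x + s * T) ^ (2 * p - 1) = -γ := by
  have hp : p.Prime := Fact.out
  have hshift (s : ℕ) : (x + s * T) ^ p - (x + s * T) = γ := by
    have hs : (s : K) ^ p = s := by
      rw [← frobenius_def, map_natCast]
    rw [add_pow_char, mul_pow, hTp, hs, ← h]
    ring
  simp_rw [pow_two_mul_char_sub_one_of_artinSchreier (hshift _) hγ]
  have hsum := sum_range_char_natCast_pow (K := K) (p := p) 1 hp.one_lt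
  rw [if_neg (by have := hp.two_le; omega)] at hsum
  simp only [pow_one] at hsum
  rw [Finset.sum_add_distrib, Finset.sum_add_distrib, Finset.sum_add_distrib, ← Finset.mul_sum,
    sum_range_char_add_mul_pow x hT hTp, ← Finset.sum_mul, hsum]
  simp

theorem IsFrobeniusNormal.artinSchreier_pow_mul {x γ : K} {m : ℕ} (hγ : IsFrobeniusNormal p γ m)
    (h : x ^ p - x = γ) (s : ℕ) :
    x ^ p ^ (m * s) = x + s * ∑ k ∈ Finset.range m, γ ^ p ^ k := by
  rw [pow_char_pow_of_artinSchreier h, sum_pow_char_pow_of_fixed ((hγ.1 m).mpr dvd_rfl)]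

theorem IsFrobeniusNormal.artinSchreier_fixed_iff {x γ : K} {m : ℕ}
    (hγ : IsFrobeniusNormal p γ m) (h : x ^ p - x = γ) (k : ℕ) :
    x ^ p ^ k = x ↔ m * p ∣ k := by
  constructor
  · intro hk
    have hγk : γ ^ p ^ k = γ := by
      rw [← h, sub_pow_char_pow, ← pow_mul, mul_comm, pow_mul, hk]
    obtain ⟨t, rfl⟩ := (hγ.1 k).mp hγk
    rw [hγ.artinSchreier_pow_mul h, add_eq_left, mul_eq_zero, or_iff_left hγ.2,
      CharP.cast_eq_zero_iff K p] at hk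
    exact mul_dvd_mul_left m hk
  · rintro ⟨t, rfl⟩
    rw [mul_assoc, hγ.artinSchreier_pow_mul h]
    simp

theorem IsFrobeniusNormal.artinSchreier_pow {x γ : K} {m : ℕ} (hp2 : p ≠ 2)
    (hγ : IsFrobeniusNormal p γ m) (h : x ^ p - x = γ) :
    IsFrobeniusNormal p (x ^ (2 * p - 1)) (m * p) := by
  have hp : p.Prime := Fact.out
  set T := ∑ k ∈ Finset.range m, γ ^ p ^ k with hT
  have hTp : T ^ p = T := sum_pow_char_pow_pow_char ((hγ.1 m).mpr dvd_rfl)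
  have hconj (s : ℕ) : (x ^ (2 * p - 1)) ^ p ^ (m * s) = (x + s * T) ^ (2 * p - 1) := by
    rw [← pow_mul, mul_comm, pow_mul, hγ.artinSchreier_pow_mul h]
  have htrace : ∑ s ∈ Finset.range p, (x ^ (2 * p - 1)) ^ p ^ (m * s) = -γ := by
    simp_rw [hconj]
    exact sum_range_char_add_mul_pow_two_mul_sub_one hp2 h hγ.ne_zero hγ.2 hTp
  have hneg (k : ℕ) : (-γ) ^ p ^ k = -γ ^ p ^ k := ((hp.odd_of_ne_two hp2).pow).neg_pow γ
  refine ⟨fun k ↦ ⟨fun hk ↦ ?_, fun hk ↦ ?_⟩, ?_⟩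
  · have hγk : γ ^ p ^ k = γ := by
      rw [← neg_inj, ← hneg, ← htrace, sum_pow_char_pow]
      refine Finset.sum_congr rfl fun s _ ↦ ?_
      rw [← pow_mul, mul_comm (p ^ (m * s)), pow_mul, hk]
    obtain ⟨t, rfl⟩ := (hγ.1 k).mp hγk
    apply mul_dvd_mul_left m
    by_contra ht
    have ht' : (t : K) ≠ 0 := mt (CharP.cast_eq_zero_iff K p t).mp ht
    have htp : (t : K) ^ p = t := by rw [← frobenius_def, map_natCast]
    have hsum := sum_range_char_add_mul_pow_two_mul_sub_one hp2 h hγ.ne_zero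
      (T := t * T) (mul_ne_zero ht' hγ.2) (by rw [mul_pow, htp, hTp])
    have hterm (s : ℕ) : (x + s * (t * T)) ^ (2 * p - 1) = x ^ (2 * p - 1) := by
      rw [← pow_char_pow_mul_of_fixed hk s, mul_assoc, hconj]
      push_cast
      ring
    simp_rw [hterm] at hsum
    simp [eq_comm, hγ.ne_zero] at hsum
  · rw [← pow_mul, mul_comm, pow_mul, (hγ.artinSchreier_fixed_iff h k).mpr hk]
  · rw [sum_range_mul_eq_sum_sum, Finset.sum_comm]
    simp_rw [pow_add p, pow_mul (x ^ (2 * p - 1)), ← sum_pow_char_pow, htrace, hneg]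
    rw [Finset.sum_neg_distrib]
    exact neg_ne_zero.mpr hγ.2

end FrobeniusSums

theorem pow_char_pow_eq_self_iff_natDegree_minpoly_dvd {p : ℕ} [Fact p.Prime] {K : Type*} [Field K]
    [Algebra (ZMod p) K] {y : K} (hy : IsIntegral (ZMod p) y) (k : ℕ) :
    y ^ p ^ k = y ↔ (minpoly (ZMod p) y).natDegree ∣ k := by
  rw [(minpoly.irreducible hy).natDegree_dvd_iff_dvd_X_pow_card_pow_sub_X, minpoly.dvd_iff]
  simp [sub_eq_zero]

theorem natDegree_minpoly_eq_of_pow_char_pow_iff {p : ℕ} [Fact p.Prime] {K : Type*} [Field K]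
    [Algebra (ZMod p) K] {y : K} (hy : IsIntegral (ZMod p) y) {m : ℕ}
    (h : ∀ k, y ^ p ^ k = y ↔ m ∣ k) : (minpoly (ZMod p) y).natDegree = m :=
  Nat.dvd_antisymm ((pow_char_pow_eq_self_iff_natDegree_minpoly_dvd hy m).mp ((h m).mpr dvd_rfl))
    ((h _).mp ((pow_char_pow_eq_self_iff_natDegree_minpoly_dvd hy _).mpr dvd_rfl))

theorem isFrobeniusNormal_of_trace_ne_zero {p : ℕ} [Fact p.Prime] {K : Type*} [Field K]
    [Algebra (ZMod p) K] {y : K} (hy : IsIntegral (ZMod p) y)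
    (htr : Algebra.trace (ZMod p) (ZMod p)⟮y⟯ (AdjoinSimple.gen (ZMod p) y) ≠ 0) :
    IsFrobeniusNormal p y (minpoly (ZMod p) y).natDegree := by
  refine ⟨pow_char_pow_eq_self_iff_natDegree_minpoly_dvd hy, fun h ↦ htr ?_⟩
  have := adjoin.finiteDimensional hy
  have : Finite (ZMod p)⟮y⟯ := Module.finite_of_finite (ZMod p)
  apply (algebraMap (ZMod p) (ZMod p)⟮y⟯).injective
  apply (algebraMap (ZMod p)⟮y⟯ K).injective
  rw [FiniteField.algebraMap_trace_eq_sum_pow, adjoin.finrank hy, map_sum]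
  simpa using h

/-- The product of the rotations of `f` by an `n`-th root of unity, `n` odd, has the shape
`q(Y ^ n)`; then `q` is monic of the same degree as `f` and vanishes at `n`-th powers of roots. -/
theorem monic_natDegree_aeval_of_prod_comp_eq {F Ω : Type*} [Field F] [Field Ω] [Algebra F Ω]
    {n : ℕ} (hn : Odd n) {ζ : Ω} (hζ : ζ ^ n = 1) {f q : F[X]} (hf : f.Monic)
    (h : ∏ j ∈ Finset.range n, (f.map (algebraMap F Ω)).comp (C (ζ ^ j) * X) =
      (q.map (algebraMap F Ω)).comp (X ^ n)) :
    q.Monic ∧ q.natDegree = f.natDegree ∧ ∀ y : Ω, aeval y f = 0 → aeval (y ^ n) q = 0 := by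
  have hn0 : n ≠ 0 := hn.pos.ne'
  have hζ0 : ζ ≠ 0 := by
    rintro rfl
    simp [hn0] at hζ
  have hdeg (j : ℕ) : (C (ζ ^ j) * X : Polynomial Ω).natDegree = 1 :=
    natDegree_C_mul_X _ (pow_ne_zero _ hζ0)
  refine ⟨?_, ?_, fun y hy ↦ ?_⟩
  · have hlead := congrArg leadingCoeff h
    rw [leadingCoeff_prod, leadingCoeff_comp (by simpa using hn0)] at hlead
    have hterm (j : ℕ) : ((f.map (algebraMap F Ω)).comp (C (ζ ^ j) * X)).leadingCoeff =
        (ζ ^ f.natDegree) ^ j := by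
      rw [leadingCoeff_comp (by rw [hdeg]; exact one_ne_zero), (hf.map _).leadingCoeff, natDegree_map]
      simp [← pow_mul, mul_comm]
    simp_rw [hterm] at hlead
    obtain ⟨k, rfl⟩ := hn
    have hsum : ∑ j ∈ Finset.range (2 * k + 1), j = (2 * k + 1) * k := by
      have := Finset.sum_range_id_mul_two (2 * k + 1)
      rw [Nat.add_sub_cancel] at this
      linarith
    rw [Finset.prod_pow_eq_pow_sum, hsum, pow_mul, ← pow_mul ζ, mul_comm, pow_mul, hζ] at hlead
    apply (algebraMap F Ω).injective
    simpa using hlead.symm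
  · have hnat := congrArg natDegree h
    rw [natDegree_prod _ _ fun j _ ↦ ?_] at hnat
    · simp only [natDegree_comp, hdeg, natDegree_map, natDegree_X_pow] at hnat
      simp only [mul_one, Finset.sum_const, Finset.card_range, smul_eq_mul] at hnat
      exact (Nat.eq_of_mul_eq_mul_left hn.pos (hnat.trans (mul_comm _ _))).symm
    · rw [← leadingCoeff_ne_zero, leadingCoeff_comp (by rw [hdeg]; exact one_ne_zero), (hf.map _).leadingCoeff]
      simp [hζ0]
  · have heval := congrArg (eval y) h
    rw [eval_prod, Finset.prod_eq_zero (Finset.mem_range.mpr hn.pos)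
      (by simpa [eval_comp, aeval_def, eval_map] using hy)] at heval
    simpa [eval_comp, aeval_def, eval_map] using heval.symm

/-- The version of `monic_natDegree_aeval_of_prod_comp_eq` with coefficients in
`F[X] / (Φ_n)` and the class of `X` as root of unity. -/
theorem monic_natDegree_aeval_of_prod_comp_root_cyclotomic_eq {F : Type*} (Ω : Type*) [Field F]
    [Field Ω] [Algebra F Ω] [IsAlgClosed Ω] {n : ℕ} (hn : Odd n) {f q : F[X]} (hf : f.Monic)
    (h : ∏ j ∈ Finset.range n, (f.map (algebraMap F (AdjoinRoot (cyclotomic n F)))).comp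
        (C (AdjoinRoot.root (cyclotomic n F) ^ j) * X) =
      (q.map (algebraMap F (AdjoinRoot (cyclotomic n F)))).comp (X ^ n)) :
    q.Monic ∧ q.natDegree = f.natDegree ∧ ∀ y : Ω, aeval y f = 0 → aeval (y ^ n) q = 0 := by
  obtain ⟨ζ, hζ⟩ := IsAlgClosed.exists_aeval_eq_zero Ω (cyclotomic n F)
    (degree_cyclotomic_pos _ _ hn.pos).ne'
  have hζn : ζ ^ n = 1 := by
    have := aeval_eq_zero_of_dvd_aeval_eq_zero (cyclotomic.dvd_X_pow_sub_one n F) hζ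
    simpa [sub_eq_zero] using this
  have hζ' : eval₂ (algebraMap F Ω) ζ (cyclotomic n F) = 0 := hζ
  have hprod := congrArg (Polynomial.map (AdjoinRoot.lift (algebraMap F Ω) ζ hζ')) h
  simp only [Polynomial.map_prod, Polynomial.map_comp, Polynomial.map_map, Polynomial.map_mul,
    Polynomial.map_pow, map_C, map_X, map_pow, AdjoinRoot.lift_root, AdjoinRoot.algebraMap_eq,
    AdjoinRoot.lift_comp_of] at hprod
  exact monic_natDegree_aeval_of_prod_comp_eq hn hζn hf (by simpa only [map_pow] using hprod)

/-- In the Cantor tower over `F_p` with `p` odd, let `i ≥ 1`, let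
`Q_i ∈ F_p[Y]` be the minimal polynomial of `x_i` over `F_p`, and let `q_i* ∈ F_p[Y]` be such
that `∏_{j=0}^{2p−2} Q_i(x^j · Y) = q_i*(Y^(2p−1))` in `A[Y]`, where
`A = F_p[X]/(Φ_{2p−1} mod p)` and `x = X mod Φ`. Then the minimal polynomial of `x_{i+1}`
over `F_p` is `q_i*(Y^p − Y)`. -/
theorem cantor_tower_minpoly_step
    (p d : ℕ) [Fact p.Prime] (hodd : p ≠ 2) (hd : 1 ≤ d)
    (Ω : Type*) [Field Ω] [Algebra (ZMod p) Ω] [IsAlgClosure (ZMod p) Ω]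
    (x : ℕ → Ω)
    (U : ℕ → IntermediateField (ZMod p) Ω)
    (hU : ∀ i, U i = IntermediateField.adjoin (ZMod p) (x '' Set.Iic i))
    (hdeg : Module.finrank (ZMod p) ↥(U 0) = d)
    (hx0 : x 0 ∈ U 0)
    (htr0 : Algebra.trace (ZMod p) ↥(U 0) ⟨x 0, hx0⟩ ≠ 0)
    (hx1 : x 1 ^ p - x 1 = x 0)
    (hxi : ∀ i, 1 ≤ i → x (i + 1) ^ p - x (i + 1) = x i ^ (2 * p - 1))
    (i : ℕ) (hi : 1 ≤ i)
    (qstar : Polynomial (ZMod p))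
    (hqstar : (∏ j ∈ Finset.range (2 * p - 1),
        ((minpoly (ZMod p) (x i)).map
            (algebraMap (ZMod p) (AdjoinRoot (cyclotomic (2 * p - 1) (ZMod p))))).comp
          (C ((AdjoinRoot.root (cyclotomic (2 * p - 1) (ZMod p))) ^ j) * X)) =
      (qstar.map
          (algebraMap (ZMod p) (AdjoinRoot (cyclotomic (2 * p - 1) (ZMod p))))).comp
        (X ^ (2 * p - 1))) :
    minpoly (ZMod p) (x (i + 1)) = qstar.comp (X ^ p - X) := by
  have hp : p.Prime := Fact.out
  have halg : Algebra.IsAlgebraic (ZMod p) Ω := IsAlgClosure.isAlgebraic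
  have hclosed : IsAlgClosed Ω := IsAlgClosure.isAlgClosed (ZMod p)
  have hchar : CharP Ω p := charP_of_injective_algebraMap' (ZMod p) p
  have hint (y : Ω) : IsIntegral (ZMod p) y := Algebra.IsIntegral.isIntegral y
  have hbase : IsFrobeniusNormal p (x 0) (minpoly (ZMod p) (x 0)).natDegree := by
    apply isFrobeniusNormal_of_trace_ne_zero (hint _)
    have hU0 : U 0 = (ZMod p)⟮x 0⟯ := by
      rw [hU, show Set.Iic 0 = {0} from Set.Iic_bot, Set.image_singleton]
    clear hdeg hU
    generalize U 0 = V at *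
    subst hU0
    exact htr0
  have htower (k : ℕ) : ∃ m, (∀ l, x (k + 1) ^ p ^ l = x (k + 1) ↔ m ∣ l) ∧
      IsFrobeniusNormal p (x (k + 1) ^ (2 * p - 1)) m := by
    induction k with
    | zero =>
      exact ⟨_, hbase.artinSchreier_fixed_iff hx1, hbase.artinSchreier_pow hodd hx1⟩
    | succ k ih =>
      obtain ⟨m, -, hm⟩ := ih
      exact ⟨_, hm.artinSchreier_fixed_iff (hxi _ k.succ_pos),
        hm.artinSchreier_pow hodd (hxi _ k.succ_pos)⟩
  obtain ⟨k, rfl⟩ := Nat.exists_eq_add_of_le' hi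
  obtain ⟨m, hperiod, hnormal⟩ := htower k
  have hn : Odd (2 * p - 1) := ⟨p - 1, by have := hp.two_le; omega⟩
  obtain ⟨hmonic, hqdeg, hroot⟩ :=
    monic_natDegree_aeval_of_prod_comp_root_cyclotomic_eq Ω hn
      (minpoly.monic (hint (x (k + 1)))) hqstar
  have hXp : (X ^ p - X : (ZMod p)[X]).natDegree = p :=
    FiniteField.X_pow_card_sub_X_natDegree_eq _ hp.one_lt
  have hXpmonic : (X ^ p - X : (ZMod p)[X]).Monic :=
    monic_X_pow_sub (by simpa using hp.one_lt)
  refine (eq_of_monic_of_dvd_of_natDegree_le (minpoly.monic (hint _))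
    (hmonic.comp hXpmonic (by rw [hXp]; exact hp.ne_zero)) (minpoly.dvd _ _ ?_) ?_).symm
  · rw [aeval_comp]
    simpa [hxi (k + 1) hi] using hroot _ (minpoly.aeval _ _)
  · rw [natDegree_comp, hXp, hqdeg, natDegree_minpoly_eq_of_pow_char_pow_iff (hint _) hperiod,
      natDegree_minpoly_eq_of_pow_char_pow_iff (hint _)
        (hnormal.artinSchreier_fixed_iff (hxi _ hi))]
end

section
/- Let p be a prime and let V ∈ F_p[X] be a nonzero polynomial. View V as an element of F_p[Y][X] and let W ∈ F_p[Y][X] be the remainder of the Euclidean division of V by the monic polynomial X^p − X − Y ∈ F_p[Y][X]. Then the degree of W in the variable Y is at most deg(V)/p; that is, p · deg_Y(W) ≤ deg(V). -/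
open Polynomial

/-- The polynomial `X ^ p - X - Y` over `R[Y]` is monic for `2 ≤ p`. -/
lemma monic_X_pow_sub_X_sub_C_X {R : Type*} [CommRing R] [Nontrivial R] {p : ℕ} (hp : 2 ≤ p) :
    (X ^ p - X - C X : R[X][X]).Monic := by
  rw [sub_sub]
  refine monic_X_pow_sub ?_
  rw [degree_X_add_C]
  exact_mod_cast hp

lemma mul_natDegree_coeff_X_pow_modByMonic_le {R : Type*} [CommRing R] [Nontrivial R] {p : ℕ}
    (hp : 2 ≤ p) (n k : ℕ) :
    p * (((X ^ n : R[X][X]) %ₘ (X ^ p - X - C X)).coeff k).natDegree ≤ n := by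
  induction n using Nat.strong_induction_on with
  | _ n ih =>
    have hmonic := monic_X_pow_sub_X_sub_C_X (R := R) hp
    have hdeg : (X ^ p - X - C X : R[X][X]).degree = p := by
      rw [sub_sub, degree_sub_eq_left_of_degree_lt, degree_X_pow]
      rw [degree_X_add_C, degree_X_pow]
      exact_mod_cast hp
    rcases lt_or_ge n p with hn | hn
    · rw [(modByMonic_eq_self_iff hmonic).2 (by rw [hdeg, degree_X_pow]; exact_mod_cast hn),
        coeff_X_pow]
      split_ifs <;> simp
    · obtain ⟨m, rfl⟩ := Nat.exists_eq_add_of_le hn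
      have hred : (X ^ (p + m) : R[X][X]) %ₘ (X ^ p - X - C X) =
          X ^ (m + 1) %ₘ (X ^ p - X - C X) + (X : R[X]) • (X ^ m %ₘ (X ^ p - X - C X)) := by
        rw [← smul_modByMonic, ← add_modByMonic, ← sub_eq_zero, ← sub_modByMonic,
          modByMonic_eq_zero_iff_dvd hmonic]
        refine ⟨X ^ m, ?_⟩
        rw [smul_eq_C_mul]
        ring
      rw [hred, coeff_add, coeff_smul, smul_eq_mul]
      have hlin := ih (m + 1) (by lia)
      have hconst := ih m (by lia)
      rcases le_max_iff.1 (natDegree_add_le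
          ((X ^ (m + 1) %ₘ (X ^ p - X - C X) : R[X][X]).coeff k)
          (X * (X ^ m %ₘ (X ^ p - X - C X) : R[X][X]).coeff k)) with h | h
      · exact (Nat.mul_le_mul_left p h).trans (hlin.trans (by lia))
      · refine (Nat.mul_le_mul_left p (h.trans natDegree_mul_le)).trans ?_
        rw [natDegree_X, mul_add, mul_one]
        lia

/-- Let `p` be a prime and `V ∈ F_p[X]` a nonzero polynomial. View `V` as an
element of `F_p[Y][X]` and let `W` be the remainder of the Euclidean division of `V` by the
monic polynomial `X^p − X − Y`. Then `p · deg_Y(W) ≤ deg(V)`, where `deg_Y(W)` is the maximal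
degree in `Y` of a coefficient of `W`. -/
theorem degY_modByMonic_artinSchreier_le
    (p : ℕ) (hp : p.Prime) (V : Polynomial (ZMod p)) (hV : V ≠ 0)
    (W : Polynomial (Polynomial (ZMod p)))
    (hW : W = (V.map (C : ZMod p →+* Polynomial (ZMod p))) %ₘ (X ^ p - X - C X)) :
    ∀ k : ℕ, p * (W.coeff k).natDegree ≤ V.natDegree := by
  have : Fact p.Prime := ⟨hp⟩
  intro k
  rw [mul_comm, ← Nat.le_div_iff_mul_le hp.pos, hW]
  refine induction_with_natDegree_le
    (fun V : (ZMod p)[X] => ((V.map C %ₘ (X ^ p - X - C X)).coeff k).natDegree ≤ V.natDegree / p)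
    V.natDegree ?_ ?_ ?_ V le_rfl
  · simp
  · intro n a ha _
    have hpow := mul_natDegree_coeff_X_pow_modByMonic_le (R := ZMod p) hp.two_le n k
    rw [Polynomial.map_mul, map_C, Polynomial.map_pow, map_X, ← smul_eq_C_mul, smul_modByMonic,
      coeff_smul, smul_eq_mul, natDegree_C_mul_X_pow n a ha, Nat.le_div_iff_mul_le hp.pos, mul_comm]
    exact (Nat.mul_le_mul_left p (natDegree_C_mul_le _ _)).trans hpow
  · intro f g hfg _ hf hg
    have hsum : (f + g).natDegree = g.natDegree := natDegree_add_eq_right_of_natDegree_lt hfg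
    rw [Polynomial.map_add, add_modByMonic, coeff_add, hsum]
    exact natDegree_add_le_of_degree_le (hf.trans (Nat.div_le_div_right hfg.le)) hg
end

section
/- Let K be a finite field of characteristic p and let F ⊆ K be a subfield with exactly p^m elements. Let α, δ, μ ∈ K satisfy δ^p − δ = α and μ^{p^m} − μ = PTr_m(α), where PTr_m(α) = Σ_{ℓ=0}^{m−1} α^{p^ℓ}. Then Δ := δ − μ lies in F, and Δ satisfies Δ^p − Δ = α − (μ^p − μ). -/
/-- In characteristic `p`, the pseudotrace `∑ ℓ < n, (x^p - x)^(p^ℓ)` telescopes. -/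
theorem sum_pow_char_sub_self_pow {R : Type*} [CommRing R] (p : ℕ) [Fact p.Prime] [CharP R p]
    (n : ℕ) (x : R) :
    ∑ ℓ ∈ Finset.range n, (x ^ p - x) ^ p ^ ℓ = x ^ p ^ n - x := by
  simp_rw [sub_pow_char_pow, ← pow_mul, ← pow_succ']
  simpa using Finset.sum_range_sub (fun ℓ => x ^ p ^ ℓ) n

/-- A finite subfield contains every root of `X ^ |F| - X`. -/
theorem Subfield.mem_of_pow_natCard_eq {K : Type*} [Field K] (F : Subfield K) [Finite F] {x : K}
    (hx : x ^ Nat.card F = x) : x ∈ F := by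
  have := Fintype.ofFinite F
  rw [Nat.card_eq_fintype_card] at hx
  have hsplits : (Polynomial.X ^ Fintype.card F - Polynomial.X : Polynomial F).Splits := by
    rw [Polynomial.splits_iff_card_roots, FiniteField.roots_X_pow_card_sub_X, ← Finset.card_def,
      Finset.card_univ, FiniteField.X_pow_card_sub_X_natDegree_eq _ Fintype.one_lt_card]
  obtain ⟨y, rfl⟩ := hsplits.mem_range_of_isRoot (i := F.subtype) (x := x)
    (FiniteField.X_pow_card_sub_X_ne_zero F Fintype.one_lt_card) (by simp [hx])
  exact y.2

/-- Let `K` be a finite field of characteristic `p` and let `F ⊆ K` be a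
subfield with exactly `p^m` elements. Let `α, δ, μ ∈ K` satisfy `δ^p − δ = α` and
`μ^(p^m) − μ = PTr_m(α)` where `PTr_m(α) = Σ_{ℓ=0}^{m−1} α^(p^ℓ)`. Then `Δ := δ − μ` lies in
`F`, and `Δ^p − Δ = α − (μ^p − μ)`. -/
theorem artin_schreier_descent
    (p m : ℕ) (hp : p.Prime) (K : Type*) [Field K] [Finite K] [CharP K p]
    (F : Subfield K) (hF : Nat.card F = p ^ m)
    (α δ μ : K) (hδ : δ ^ p - δ = α)
    (hμ : μ ^ p ^ m - μ = ∑ ℓ ∈ Finset.range m, α ^ p ^ ℓ) :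
    δ - μ ∈ F ∧ (δ - μ) ^ p - (δ - μ) = α - (μ ^ p - μ) := by
  have := Fact.mk hp
  refine ⟨F.mem_of_pow_natCard_eq ?_, ?_⟩
  · rw [← hδ, sum_pow_char_sub_self_pow] at hμ
    rw [hF, sub_pow_char_pow]
    linear_combination -hμ
  · rw [sub_pow_char]
    linear_combination hδ
end

section
/- In the Cantor tower over F_p with p odd, set q = p^d = |U_0|. Then for every i ≥ 1 the element γ_i = x_i^{2p−1} is normal over U_0: the family of Galois conjugates (γ_i^{q^j})_{0 ≤ j < p^i} is a basis of U_i as a vector space over U_0. -/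
open IntermediateField

set_option synthInstance.maxHeartbeats 1000000

section Aux

open Polynomial Finset

/-- In characteristic `p`, if `y` is fixed by `f ^ (p ^ n)` and its trace `∑ f ^ j y` is nonzero,
then the `f`-orbit of `y` is linearly independent. -/
theorem linearIndependent_pow_apply_of_sum_ne_zero (p : ℕ) [Fact p.Prime] {K V : Type*} [Field K]
    [CharP K p] [AddCommGroup V] [Module K V] (f : Module.End K V) (n : ℕ) (y : V)
    (hfix : (f ^ p ^ n) y = y) (hsum : ∑ j ∈ range (p ^ n), (f ^ j) y ≠ 0) :
    LinearIndependent K fun j : Fin (p ^ n) => (f ^ (j : ℕ)) y := by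
  classical
  have hgeom : ∑ j ∈ range (p ^ n), (X : K[X]) ^ j = (X - 1) ^ (p ^ n - 1) := by
    have hX : (X - 1 : K[X]) ≠ 0 := by simpa using X_sub_C_ne_zero (1 : K)
    apply mul_right_cancel₀ hX
    rw [geom_sum_mul, ← pow_succ, Nat.sub_add_cancel (Nat.one_le_pow _ _ (Fact.out : p.Prime).pos),
      sub_pow_char_pow, one_pow]
  rw [Fintype.linearIndependent_iff]
  intro g hg
  by_contra! hne
  obtain ⟨j₀, hj₀⟩ := hne
  set P : K[X] := ∑ j : Fin (p ^ n), C (g j) * X ^ (j : ℕ) with hP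
  have hcoeff : P.coeff j₀ = g j₀ := by
    simp [hP, coeff_X_pow, Fin.val_inj]
  have hP0 : P ≠ 0 := fun h => hj₀ (by rw [← hcoeff, h, coeff_zero])
  have hPdeg : P.degree < (p ^ n : ℕ) := by
    refine (degree_sum_le _ _).trans_lt ?_
    rw [Finset.sup_lt_iff (by exact WithBot.bot_lt_coe _)]
    intro j _
    exact (degree_C_mul_X_pow_le _ _).trans_lt (by exact_mod_cast j.2)
  have hPy : aeval f P y = 0 := by
    simpa [hP, map_sum, LinearMap.sum_apply, Algebra.algebraMap_eq_smul_one] using hg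
  have hQy : aeval f ((X - 1 : K[X]) ^ p ^ n) y = 0 := by
    rw [sub_pow_char_pow, one_pow]
    simp [hfix]
  obtain ⟨a, b, hab⟩ : ∃ a b, EuclideanDomain.gcd P ((X - 1) ^ p ^ n) =
      a * P + b * (X - 1) ^ p ^ n :=
    ⟨_, _, by rw [EuclideanDomain.gcd_eq_gcd_ab, mul_comm, mul_comm ((X - 1 : K[X]) ^ p ^ n)]⟩
  have hprime : Prime (X - 1 : K[X]) := by simpa using prime_X_sub_C (1 : K)
  obtain ⟨m, -, hm⟩ := (dvd_prime_pow hprime _).1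
    (EuclideanDomain.gcd_dvd_right P ((X - 1 : K[X]) ^ p ^ n))
  have hmP : (X - 1 : K[X]) ^ m ∣ P := hm.symm.dvd.trans (EuclideanDomain.gcd_dvd_left _ _)
  have hmlt : m < p ^ n := by
    have h := (degree_le_of_dvd hmP hP0).trans_lt hPdeg
    rw [degree_pow, show (X - 1 : K[X]) = X - C 1 by simp, degree_X_sub_C, nsmul_one] at h
    exact_mod_cast h
  obtain ⟨c, hc⟩ : EuclideanDomain.gcd P ((X - 1) ^ p ^ n) ∣ ∑ j ∈ range (p ^ n), (X : K[X]) ^ j := by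
    rw [hgeom]
    exact hm.dvd.trans (pow_dvd_pow _ (by omega))
  apply hsum
  have : aeval f (∑ j ∈ range (p ^ n), (X : K[X]) ^ j) y = 0 := by
    rw [hc, hab, mul_comm, map_mul, map_add, map_mul, map_mul]
    simp only [Module.End.mul_apply, LinearMap.add_apply, hPy, hQy, map_zero, add_zero]
  simpa [map_sum, LinearMap.sum_apply] using this

/-- The sum of the first `a * b` Frobenius conjugates of `g`, computed in two stages. -/
theorem sum_range_mul_pow_char_pow {R : Type*} [CommRing R] (p : ℕ) [Fact p.Prime] [CharP R p]
    (r a b : ℕ) (g : R) :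
    ∑ j ∈ range (a * b), g ^ (p ^ r) ^ j =
      ∑ k ∈ range a, (∑ j ∈ range b, g ^ ((p ^ r) ^ a) ^ j) ^ (p ^ r) ^ k := by
  simp_rw [← pow_mul p, sum_pow_char_pow, ← pow_mul g, ← pow_add]
  induction b with
  | zero => simp
  | succ b ih =>
    rw [Nat.mul_succ, sum_range_add, ih, ← sum_add_distrib]
    refine sum_congr rfl fun k _ => ?_
    rw [sum_range_succ]
    congr 3
    ring

theorem pow_char_pow_eq_add_sum {R : Type*} [CommRing R] (p : ℕ) [Fact p.Prime] [CharP R p]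
    {z g : R} (h : z ^ p - z = g) (n : ℕ) :
    z ^ p ^ n = z + ∑ j ∈ range n, g ^ p ^ j := by
  induction n with
  | zero => simp
  | succ n ih =>
    rw [pow_succ', pow_mul, sub_eq_iff_eq_add'.1 h, add_pow_char_pow, ih, sum_range_succ, add_assoc]

variable {p : ℕ} [Fact p.Prime] {L : Type*} [Field L] [Algebra (ZMod p) L]

theorem sum_add_algebraMap_pow_pred_s17 (z : L) :
    ∑ c : ZMod p, (z + algebraMap (ZMod p) L c) ^ (p - 1) = -1 := by
  have hp : p.Prime := Fact.out
  have hpow : ∑ c : ZMod p, c ^ (p - 1) = -1 := by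
    have h (c : ZMod p) : c ^ (p - 1) = 1 - if c = 0 then 1 else 0 := by
      split_ifs with hc
      · rw [hc, zero_pow (Nat.sub_ne_zero_of_lt hp.one_lt), sub_self]
      · rw [ZMod.pow_card_sub_one_eq_one hc, sub_zero]
    simp [h]
  simp_rw [add_pow]
  rw [sum_comm, sum_range_succ', sum_eq_zero, zero_add]
  · simp_rw [← map_pow, pow_zero, one_mul, Nat.choose_zero_right, Nat.cast_one, mul_one,
      Nat.sub_zero]
    rw [← map_sum, hpow, map_neg, map_one]
  · intro k hk
    rw [mem_range] at hk
    rw [← sum_mul, ← mul_sum]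
    simp_rw [← map_pow]
    rw [← map_sum, FiniteField.sum_pow_lt_card_sub_one (ZMod p) _ (by rw [ZMod.card]; omega)]
    simp

theorem sum_add_algebraMap_pow (hodd : p ≠ 2) (z : L) :
    ∑ c : ZMod p, (z + algebraMap (ZMod p) L c) ^ (2 * p - 1) = -(z ^ p - z) := by
  have : CharP L p := charP_of_injective_algebraMap (algebraMap (ZMod p) L).injective p
  have hp : p.Prime := Fact.out
  have h2 := hp.two_le
  have key (c : ZMod p) : (z + algebraMap (ZMod p) L c) ^ (2 * p - 1) =
      z ^ p + algebraMap (ZMod p) L c +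
        (z ^ p - z) * (z + algebraMap (ZMod p) L c) ^ (p - 1) := by
    set y := z + algebraMap (ZMod p) L c with hy
    have hyp : y ^ p = z ^ p + algebraMap (ZMod p) L c := by
      rw [hy, add_pow_char, ← map_pow, ZMod.pow_card]
    have hy1 : y * y ^ (p - 1) = y ^ p := by rw [← pow_succ', Nat.sub_add_cancel hp.one_le]
    rw [show 2 * p - 1 = p + (p - 1) by omega, pow_add, ← hyp]
    nth_rewrite 2 [← hy1]
    linear_combination y ^ (p - 1) * hyp - y ^ (p - 1) * hy
  have hlin : ∑ c : ZMod p, algebraMap (ZMod p) L c = 0 := by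
    have := FiniteField.sum_pow_lt_card_sub_one (ZMod p) 1 (by rw [ZMod.card]; omega)
    simp only [pow_one] at this
    rw [← map_sum, this, map_zero]
  simp_rw [key]
  rw [sum_add_distrib, sum_add_distrib, hlin, ← mul_sum, sum_add_algebraMap_pow_pred_s17]
  simp

theorem sum_range_natCast_mul_eq_sum {M : Type*} [AddCommMonoid M] {e : ZMod p} (he : e ≠ 0)
    (f : ZMod p → M) : ∑ k ∈ range p, f (k * e) = ∑ c : ZMod p, f c := by
  rw [← Equiv.sum_comp (Equiv.mulRight₀ e he) f]
  refine sum_nbij' (fun k => (k : ZMod p)) ZMod.val ?_ ?_ ?_ ?_ ?_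
  · simp
  · intro c _; simpa using c.val_lt
  · intro k hk; exact ZMod.val_cast_of_lt (mem_range.1 hk)
  · simp
  · simp

theorem pow_char_pow_mul_eq_add {z : L} {e : ZMod p} {n : ℕ}
    (h : z ^ p ^ n = z + algebraMap (ZMod p) L e) (k : ℕ) :
    z ^ (p ^ n) ^ k = z + algebraMap (ZMod p) L (k * e) := by
  have : CharP L p := charP_of_injective_algebraMap (algebraMap (ZMod p) L).injective p
  induction k with
  | zero => simp
  | succ k ih =>
    rw [pow_succ, pow_mul, ih, add_pow_char_pow, h, ← map_pow, ZMod.pow_card_pow, add_assoc,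
      ← map_add]
    push_cast
    ring_nf

/-- The Cantor tower recursion: `x (i + 1)` is moved by a nonzero prime-field translation under
the Frobenius of the `i`-th layer, and the trace of `γ i` down to the bottom layer is `± γ 0`. -/
theorem cantor_tower_frobenius_and_trace (hodd : p ≠ 2) (d : ℕ) (x γ : ℕ → L)
    (hx : ∀ i, x (i + 1) ^ p - x (i + 1) = γ i)
    (hγ : ∀ i, γ (i + 1) = x (i + 1) ^ (2 * p - 1)) {c : ZMod p} (hc : c ≠ 0)
    (htr : ∑ k ∈ range d, γ 0 ^ p ^ k = algebraMap (ZMod p) L c) (i : ℕ) :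
    x (i + 1) ^ p ^ (d * p ^ i) = x (i + 1) + algebraMap (ZMod p) L ((-1) ^ i * c) ∧
      ∑ j ∈ range (p ^ i), γ i ^ (p ^ d) ^ j = (-1) ^ i * γ 0 := by
  have : CharP L p := charP_of_injective_algebraMap (algebraMap (ZMod p) L).injective p
  have hneg (i n : ℕ) : ((-1 : L) ^ i) ^ p ^ n = (-1) ^ i := by
    rw [← pow_mul, mul_comm, pow_mul,
      (((Fact.out : p.Prime).odd_of_ne_two hodd).pow).neg_one_pow]
  have hstep (i : ℕ) (h : ∑ j ∈ range (p ^ i), γ i ^ (p ^ d) ^ j = (-1) ^ i * γ 0) :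
      x (i + 1) ^ p ^ (d * p ^ i) = x (i + 1) + algebraMap (ZMod p) L ((-1) ^ i * c) := by
    have h1 := sum_range_mul_pow_char_pow p 1 d (p ^ i) (γ i)
    simp only [pow_one] at h1
    rw [pow_char_pow_eq_add_sum p (hx i), h1, h]
    simp_rw [mul_pow, hneg]
    rw [← mul_sum, htr]
    simp
  suffices h : ∑ j ∈ range (p ^ i), γ i ^ (p ^ d) ^ j = (-1) ^ i * γ 0 from ⟨hstep i h, h⟩
  induction i with
  | zero => simp
  | succ i ih =>
    have he : (-1) ^ i * c ≠ 0 := mul_ne_zero (pow_ne_zero _ (neg_ne_zero.2 one_ne_zero)) hc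
    have hinner : ∑ j ∈ range p, γ (i + 1) ^ ((p ^ d) ^ p ^ i) ^ j = -γ i := by
      rw [← hx i, ← sum_add_algebraMap_pow hodd, ← sum_range_natCast_mul_eq_sum he]
      refine sum_congr rfl fun k _ => ?_
      rw [hγ, ← pow_mul p, pow_right_comm, pow_char_pow_mul_eq_add (hstep i ih)]
    rw [pow_succ p, sum_range_mul_pow_char_pow p d, hinner]
    simp_rw [← pow_mul p, neg_pow (γ i)]
    have h1 (k : ℕ) : (-1 : L) ^ p ^ k = -1 := by simpa using hneg 1 k
    simp_rw [h1, pow_mul p]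
    rw [← mul_sum, ih]
    ring

theorem pow_char_pow_eq_self_of_mem_adjoin {s : Set L} {n : ℕ}
    (hs : ∀ y ∈ s, y ^ p ^ n = y) {y : L} (hy : y ∈ IntermediateField.adjoin (ZMod p) s) :
    y ^ p ^ n = y := by
  have : CharP L p := charP_of_injective_algebraMap (algebraMap (ZMod p) L).injective p
  induction hy using IntermediateField.adjoin_induction with
  | mem y hy => exact hs y hy
  | algebraMap c => rw [← map_pow, ZMod.pow_card_pow]
  | add y z _ _ hy hz => rw [add_pow_char_pow, hy, hz]
  | inv y _ hy => rw [inv_pow, hy]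
  | mul y z _ _ hy hz => rw [mul_pow, hy, hz]

theorem finite_and_ncard_le_of_pow_eq_self {s : Set L} {m : ℕ} (hm : 1 < m)
    (hs : ∀ y ∈ s, y ^ m = y) : s.Finite ∧ s.ncard ≤ m := by
  classical
  have hsub : s ⊆ ((X ^ m - X : L[X]).roots.toFinset : Set L) := fun y hy => by
    simp [FiniteField.X_pow_card_sub_X_ne_zero L hm, hs y hy]
  refine ⟨(Finset.finite_toSet _).subset hsub, (Set.ncard_le_ncard hsub).trans ?_⟩
  rw [Set.ncard_coe_finset]
  exact (Multiset.toFinset_card_le _).trans ((card_roots' _).trans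
    (FiniteField.X_pow_card_sub_X_natDegree_eq L hm).le)

end Aux

/-- In the Cantor tower over `F_p` with `p` odd, set `q = p^d = |U_0|`.
Then for every `i ≥ 1` the element `γ_i = x_i^(2p−1)` is normal over `U_0`: the family of
Galois conjugates `(γ_i^(q^j))_{0 ≤ j < p^i}` is a basis of `U_i` as a `U_0`-vector space. -/
theorem cantor_tower_gamma_normal_over_base
    (p d : ℕ) [Fact p.Prime] (hodd : p ≠ 2) (hd : 1 ≤ d)
    (Ω : Type*) [Field Ω] [Algebra (ZMod p) Ω] [IsAlgClosure (ZMod p) Ω]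
    (x : ℕ → Ω)
    (U : ℕ → IntermediateField (ZMod p) Ω)
    (hU : ∀ i, U i = IntermediateField.adjoin (ZMod p) (x '' Set.Iic i))
    (hdeg : Module.finrank (ZMod p) ↥(U 0) = d)
    (hx0 : x 0 ∈ U 0)
    (htr0 : Algebra.trace (ZMod p) ↥(U 0) ⟨x 0, hx0⟩ ≠ 0)
    (hx1 : x 1 ^ p - x 1 = x 0)
    (hxi : ∀ i, 1 ≤ i → x (i + 1) ^ p - x (i + 1) = x i ^ (2 * p - 1))
    (γ : ℕ → Ω) (hγ0 : γ 0 = x 0) (hγ : ∀ i, 1 ≤ i → γ i = x i ^ (2 * p - 1)) :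
    ∀ i, 1 ≤ i →
      ∃ (hle : U 0 ≤ U i) (hmem : ∀ j : Fin (p ^ i), γ i ^ (p ^ d) ^ (j : ℕ) ∈ U i),
        letI : Algebra ↥(U 0) ↥(U i) :=
          (IntermediateField.inclusion hle).toRingHom.toAlgebra
        LinearIndependent ↥(U 0)
            (fun j : Fin (p ^ i) => (⟨γ i ^ (p ^ d) ^ (j : ℕ), hmem j⟩ : ↥(U i))) ∧
          Submodule.span ↥(U 0)
              (Set.range fun j : Fin (p ^ i) =>
                (⟨γ i ^ (p ^ d) ^ (j : ℕ), hmem j⟩ : ↥(U i))) = ⊤ := by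
  have : CharP Ω p := charP_of_injective_algebraMap (algebraMap (ZMod p) Ω).injective p
  have hp : p.Prime := Fact.out
  have hfin0 : FiniteDimensional (ZMod p) (U 0) := .of_finrank_pos (by omega)
  have hFinite0 : Finite (U 0) := Module.finite_of_finite (ZMod p)
  have hcard0 : Nat.card (U 0) = p ^ d := by
    rw [Module.natCard_eq_pow_finrank (K := ZMod p), hdeg, Nat.card_zmod]
  have hfix0 (a : U 0) : (a : Ω) ^ p ^ d = a := by
    have := Fintype.ofFinite (U 0)
    rw [← hcard0, ← SubmonoidClass.coe_pow, Nat.card_eq_fintype_card, FiniteField.pow_card]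
  have htr : ∑ k ∈ Finset.range d, γ 0 ^ p ^ k =
      algebraMap (ZMod p) Ω (Algebra.trace (ZMod p) (U 0) ⟨x 0, hx0⟩) := by
    rw [IsScalarTower.algebraMap_apply (ZMod p) (U 0) Ω,
      FiniteField.algebraMap_trace_eq_sum_pow, hdeg, Nat.card_zmod, map_sum]
    simp [hγ0, IntermediateField.algebraMap_apply]
  have hx (i : ℕ) : x (i + 1) ^ p - x (i + 1) = γ i := by
    rcases i with _ | i
    · rw [hγ0, ← hx1]
    · rw [hxi _ (by omega), hγ _ (by omega)]
  have hmain := cantor_tower_frobenius_and_trace hodd d x γ hx (fun i => hγ _ (by omega)) htr0 htr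
  have hxfix (i : ℕ) : x i ^ p ^ (d * p ^ i) = x i := by
    rcases i with _ | i
    · simpa using hfix0 ⟨x 0, hx0⟩
    · rw [pow_succ, ← mul_assoc, pow_mul p, pow_char_pow_mul_eq_add (hmain i).1]
      simp
  have hxfix' {i j : ℕ} (hij : i ≤ j) : x i ^ p ^ (d * p ^ j) = x i := by
    obtain ⟨k, rfl⟩ := Nat.exists_eq_add_of_le hij
    rw [pow_add, ← mul_assoc, pow_mul p]
    generalize p ^ k = m
    induction m with
    | zero => simp
    | succ m ih => rw [pow_succ, pow_mul, ih, hxfix]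
  intro i hi
  have hUfix : ∀ y ∈ (U i : Set Ω), y ^ p ^ (d * p ^ i) = y := by
    intro y hy
    rw [SetLike.mem_coe, hU i] at hy
    refine pow_char_pow_eq_self_of_mem_adjoin ?_ hy
    rintro _ ⟨j, hj, rfl⟩
    exact hxfix' hj
  have hle : U 0 ≤ U i := by
    rw [hU 0, hU i]
    exact IntermediateField.adjoin.mono _ _ _ (Set.image_mono (Set.Iic_subset_Iic.2 i.zero_le))
  have hxmem : x i ∈ U i := by
    rw [hU i]
    exact IntermediateField.subset_adjoin _ _ ⟨i, Set.mem_Iic.2 le_rfl, rfl⟩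
  have hγmem : γ i ∈ U i := by
    rw [hγ i hi]
    exact pow_mem hxmem _
  refine ⟨hle, fun j => pow_mem hγmem _, ?_⟩
  let : Algebra (U 0) (U i) := (IntermediateField.inclusion hle).toRingHom.toAlgebra
  let σ : Module.End (U 0) Ω :=
    { toFun := fun y => y ^ p ^ d
      map_add' := fun y z => add_pow_char_pow y z p d
      map_smul' := fun a y => by
        simp only [Algebra.smul_def, mul_pow, RingHom.id_apply]
        congr 1
        exact hfix0 a }
  have hσ (j : ℕ) (y : Ω) : (σ ^ j) y = y ^ (p ^ d) ^ j := by
    induction j with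
    | zero => simp
    | succ j ih =>
      rw [pow_succ', Module.End.mul_apply, ih, pow_succ, pow_mul]
      rfl
  have hx0ne : γ 0 ≠ 0 := by
    rw [hγ0]
    intro h
    apply htr0
    rw [show (⟨x 0, hx0⟩ : U 0) = 0 from Subtype.ext h, map_zero]
  have hliΩ : LinearIndependent (U 0) fun j : Fin (p ^ i) => γ i ^ (p ^ d) ^ (j : ℕ) := by
    have : CharP (U 0) p := charP_of_injective_algebraMap (algebraMap (ZMod p) (U 0)).injective p
    have h := linearIndependent_pow_apply_of_sum_ne_zero p σ i (γ i)
      (by rw [hσ, ← pow_mul p]; exact hUfix _ hγmem)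
      (by
        simp_rw [hσ]
        rw [(hmain i).2]
        exact mul_ne_zero (pow_ne_zero _ (neg_ne_zero.2 one_ne_zero)) hx0ne)
    simpa only [hσ] using h
  let ι : U i →ₗ[U 0] Ω :=
    { toFun := fun y => y
      map_add' := fun _ _ => rfl
      map_smul' := fun _ _ => rfl }
  have hli : LinearIndependent (U 0)
      (fun j : Fin (p ^ i) => (⟨γ i ^ (p ^ d) ^ (j : ℕ), pow_mem hγmem _⟩ : U i)) :=
    LinearIndependent.of_comp ι hliΩ
  refine ⟨hli, ?_⟩
  obtain ⟨hfin, hcard⟩ := finite_and_ncard_le_of_pow_eq_self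
    (Nat.one_lt_pow (mul_ne_zero (by omega) (pow_ne_zero _ hp.ne_zero)) hp.one_lt) hUfix
  have : Finite (U i) := hfin
  have : Module.Finite (U 0) (U i) := .of_finite
  refine hli.span_eq_top_of_card_eq_finrank' (le_antisymm hli.fintype_card_le_finrank ?_)
  have hcardi : Nat.card (U i) ≤ p ^ (d * p ^ i) := hcard
  rw [Module.natCard_eq_pow_finrank (K := U 0), hcard0, ← pow_mul] at hcardi
  rw [Fintype.card_fin]
  exact Nat.le_of_mul_le_mul_left ((Nat.pow_le_pow_iff_right hp.one_lt).1 hcardi) hd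
end
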